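/- Let k ≥ 2, let (X_i, σ_{X_i}), i = 1,…,k, be one-sided subshifts such that X_{i+1} is a factor of X_i with a one-block factor map π_i : X_i → X_{i+1} for i = 1,…,k−1; let π_0 be the identity on X_1, τ_i = π_i ∘ ⋯ ∘ π_0, and a = (a_1,…,a_k) with a_1 > 0 and a_i ≥ 0 for i ≥ 2. Let p ∈ ℕ, φ ∈ D_w(X_1, p), Φ the potential generated by φ, and Φ^{(2)} the potential on X_2 generated by φ^{(2)}(J) = ( Σ_{I ∈ L_n(X_1), π_1 I = J} φ(I)^{1/a_1} )^{a_1}, J ∈ L_n(X_2). Set b = (a_1 + a_2, a_3, …, a_k) ∈ ℝ^{k−1}. Then: (i) I(Φ, a) is a non-empty compact convex subset of M(X_1, σ_{X_1}) and each extreme point of I(Φ, a) is ergodic; (ii) μ ∈ I(Φ, a) if and only if μ ∈ I_{μ∘π_1^{-1}}( (1/a_1) Φ ) and μ ∘ π_1^{-1} ∈ I(Φ^{(2)}, b); (iii) I(Φ, a) is a singleton if and only if I(Φ^{(2)}, b) is a singleton {ν} and I_ν( (1/a_1) Φ ) contains a unique ergodic measure. -/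

import Mathlib

open MeasureTheory Filter Topology
open scoped Classical ENNReal NNReal

noncomputable section

/-- The left shift on one-sided sequences. -/
def shiftMap {A : Type} : (ℕ → A) → (ℕ → A) := fun x n => x (n + 1)

/-- The cylinder set of a finite word. -/
def cyl {A : Type} (I : List A) : Set (ℕ → A) :=
  {x | ∀ i : Fin I.length, x i = I.get i}

/-- Membership of a word in the language of `X`. -/
def Lang {A : Type} (X : Set (ℕ → A)) (I : List A) : Prop :=
  (cyl I ∩ X).Nonempty

/-- `X` is a (nonempty) one-sided subshift. -/
def IsSubshift {A : Type} [TopologicalSpace A] (X : Set (ℕ → A)) : Prop :=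
  X.Nonempty ∧ IsCompact X ∧ shiftMap '' X ⊆ X

/-- weak `p`-specification -/
def WeakSpecification {A : Type} (X : Set (ℕ → A)) (p : ℕ) : Prop :=
  ∀ I J : List A, Lang X I → Lang X J →
    ∃ K : List A, K.length ≤ p ∧ Lang X (I ++ K ++ J)

/-- `p`-specification -/
def Specification {A : Type} (X : Set (ℕ → A)) (p : ℕ) : Prop :=
  ∀ I J : List A, Lang X I → Lang X J →
    ∃ K : List A, K.length = p ∧ Lang X (I ++ K ++ J)

/-- invariant probability measures supported on `X` (predicate on plain measures) -/
def InvOn {A : Type} [MeasurableSpace A] (X : Set (ℕ → A)) (μ : Measure (ℕ → A)) : Prop :=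
  IsProbabilityMeasure μ ∧ μ.map shiftMap = μ ∧ μ X = 1

/-- the set of shift-invariant probability measures on `X` -/
def MInv {A : Type} [MeasurableSpace A] (X : Set (ℕ → A)) :
    Set (ProbabilityMeasure (ℕ → A)) :=
  {μ | (μ : Measure (ℕ → A)).map shiftMap = (μ : Measure (ℕ → A)) ∧
    (μ : Measure (ℕ → A)) X = 1}

/-- measure of a word: `μ([I] ∩ X)` -/
def mw {A : Type} [MeasurableSpace A] (X : Set (ℕ → A)) (μ : Measure (ℕ → A))
    (I : List A) : ℝ :=
  (μ (cyl I ∩ X)).toReal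

/-- the initial word of length `n` of a sequence -/
def wordOf {A : Type} (x : ℕ → A) (n : ℕ) : List A := List.ofFn (fun i : Fin n => x i)

/-- `n`-block entropy -/
def Hblock {A : Type} [Fintype A] [MeasurableSpace A] (X : Set (ℕ → A))
    (μ : Measure (ℕ → A)) (n : ℕ) : ℝ :=
  -∑ w : Fin n → A, mw X μ (List.ofFn w) * Real.log (mw X μ (List.ofFn w))

/-- measure-theoretic entropy (the limit exists for invariant measures; `liminf` realizes it) -/
def ent {A : Type} [Fintype A] [MeasurableSpace A] (X : Set (ℕ → A))
    (μ : Measure (ℕ → A)) : ℝ :=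
  liminf (fun n : ℕ => Hblock X μ n / n) atTop

/-- extended logarithm: `log t`, with value `⊥` for `t ≤ 0` -/
def elog (t : ℝ) : EReal := if t ≤ 0 then ⊥ else ((Real.log t : ℝ) : EReal)

/-- the integral `∫ log g dμ`, valued in `ℝ ∪ {−∞}` -/
def intlog {Ω : Type*} [MeasurableSpace Ω] (μ : Measure Ω) (g : Ω → ℝ) : EReal :=
  ((∫⁻ x, ENNReal.ofReal (Real.log (g x)) ∂μ : ℝ≥0∞) : EReal) -
    ((∫⁻ x, (if g x ≤ 0 then (⊤ : ℝ≥0∞) else ENNReal.ofReal (-Real.log (g x))) ∂μ : ℝ≥0∞) : EReal)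

/-- sub-additive potential `Φ = (log φ_n)_{n ≥ 1}` -/
def SubaddPot {A : Type} [TopologicalSpace A] (X : Set (ℕ → A))
    (φ : ℕ → (ℕ → A) → ℝ) : Prop :=
  (∀ n, 1 ≤ n → ContinuousOn (φ n) X) ∧
  (∀ n, 1 ≤ n → ∀ x ∈ X, 0 ≤ φ n x) ∧
  ∃ c > (0:ℝ), ∀ n m : ℕ, 1 ≤ n → 1 ≤ m → ∀ x ∈ X,
    φ (n + m) x ≤ c * φ n x * φ m (shiftMap^[n] x)

/-- `Φ_*(μ) = lim (1/n) ∫ log φ_n dμ` (realized as a `liminf` in `EReal`) -/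
def PhiStar {A : Type} [MeasurableSpace A] (μ : Measure (ℕ → A))
    (φ : ℕ → (ℕ → A) → ℝ) : EReal :=
  liminf (fun n : ℕ => (((n : ℝ)⁻¹ : ℝ) : EReal) * intlog μ (φ n)) atTop

/-- sub-multiplicative function on the language of `X` -/
def Submult {A : Type} (X : Set (ℕ → A)) (φ : List A → ℝ) : Prop :=
  (∀ I, Lang X I → 0 ≤ φ I) ∧ φ [] = 1 ∧
  ∃ c > (0:ℝ), ∀ I J : List A, Lang X (I ++ J) → φ (I ++ J) ≤ c⁻¹ * φ I * φ J

/-- the potential generated by a word function -/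
def genPot {A : Type} (φ : List A → ℝ) : ℕ → (ℕ → A) → ℝ := fun n x => φ (wordOf x n)

/-- the scaled potential `cΦ = (log φ_n^c)` -/
def scPot {Ω : Type*} (c : ℝ) (φ : ℕ → Ω → ℝ) : ℕ → Ω → ℝ := fun n x => φ n x ^ c

/-- the "pressure value" `Φ_*(μ) + h_μ` -/
def eqVal {A : Type} [Fintype A] [MeasurableSpace A] (X : Set (ℕ → A))
    (φ : ℕ → (ℕ → A) → ℝ) (μ : ProbabilityMeasure (ℕ → A)) : EReal :=
  PhiStar (μ : Measure (ℕ → A)) φ + ((ent X (μ : Measure (ℕ → A)) : ℝ) : EReal)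

/-- the set of equilibrium states of `Φ` -/
def EqSet {A : Type} [Fintype A] [MeasurableSpace A] (X : Set (ℕ → A))
    (φ : ℕ → (ℕ → A) → ℝ) : Set (ProbabilityMeasure (ℕ → A)) :=
  {μ | μ ∈ MInv X ∧ eqVal X φ μ = ⨆ η ∈ MInv X, eqVal X φ η}

/-- sequence map induced by a one-block map -/
def blockMap {A B : Type} (π : A → B) : (ℕ → A) → (ℕ → B) := fun x n => π (x n)

/-- pushforward of a probability measure under a one-block map -/
def pushM {A B : Type} [MeasurableSpace A] [MeasurableSpace B] (π : A → B)
    (μ : ProbabilityMeasure (ℕ → A)) : Measure (ℕ → B) :=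
  (μ : Measure (ℕ → A)).map (blockMap π)

/-- conditional equilibrium states of `Φ` over `ν` -/
def CondEqSet {A B : Type} [Fintype A] [MeasurableSpace A] [MeasurableSpace B]
    (X : Set (ℕ → A)) (π : A → B) (φ : ℕ → (ℕ → A) → ℝ) (ν : Measure (ℕ → B)) :
    Set (ProbabilityMeasure (ℕ → A)) :=
  {μ | μ ∈ MInv X ∧ pushM π μ = ν ∧
    eqVal X φ μ = ⨆ η ∈ {η | η ∈ MInv X ∧ pushM π η = ν}, eqVal X φ η}

/-- the projected word function `ψ(J) = Σ_{I : πI = J} φ(I)` -/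
def psiProj {A B : Type} [Fintype A] (X : Set (ℕ → A)) (π : A → B) (φ : List A → ℝ)
    (J : List B) : ℝ :=
  ∑ w : Fin J.length → A,
    if Lang X (List.ofFn w) ∧ List.map π (List.ofFn w) = J then φ (List.ofFn w) else 0

/-- `φ^{(2)}(J) = (Σ_{I : πI = J} φ(I)^{1/a₁})^{a₁}` -/
def phiTwo {A B : Type} [Fintype A] (X : Set (ℕ → A)) (π : A → B) (φ : List A → ℝ)
    (a₁ : ℝ) (J : List B) : ℝ :=
  (∑ w : Fin J.length → A,
    if Lang X (List.ofFn w) ∧ List.map π (List.ofFn w) = J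
    then φ (List.ofFn w) ^ a₁⁻¹ else 0) ^ a₁

/-- `a`-weighted pressure value for `k = 2` -/
def wVal2 {A B : Type} [Fintype A] [Fintype B] [MeasurableSpace A] [MeasurableSpace B]
    (X : Set (ℕ → A)) (Y : Set (ℕ → B)) (π : A → B) (φ : ℕ → (ℕ → A) → ℝ)
    (a₁ a₂ : ℝ) (μ : ProbabilityMeasure (ℕ → A)) : EReal :=
  PhiStar (μ : Measure (ℕ → A)) φ +
    ((a₁ * ent X (μ : Measure (ℕ → A)) + a₂ * ent Y (pushM π μ) : ℝ) : EReal)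

/-- the set of `a`-weighted equilibrium states, `k = 2` -/
def WEqSet2 {A B : Type} [Fintype A] [Fintype B] [MeasurableSpace A] [MeasurableSpace B]
    (X : Set (ℕ → A)) (Y : Set (ℕ → B)) (π : A → B) (φ : ℕ → (ℕ → A) → ℝ)
    (a₁ a₂ : ℝ) : Set (ProbabilityMeasure (ℕ → A)) :=
  {μ | μ ∈ MInv X ∧ wVal2 X Y π φ a₁ a₂ μ = ⨆ η ∈ MInv X, wVal2 X Y π φ a₁ a₂ η}

/-- convexity of a set of probability measures -/
def ConvexPM {Ω : Type*} [MeasurableSpace Ω] (S : Set (ProbabilityMeasure Ω)) : Prop :=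
  ∀ μ₁ ∈ S, ∀ μ₂ ∈ S, ∀ t : ℝ, 0 ≤ t → t ≤ 1 → ∀ μ : ProbabilityMeasure Ω,
    (μ : Measure Ω) = ENNReal.ofReal t • (μ₁ : Measure Ω) +
      ENNReal.ofReal (1 - t) • (μ₂ : Measure Ω) → μ ∈ S

/-- extreme points of a set of probability measures -/
def IsExtremePM {Ω : Type*} [MeasurableSpace Ω] (S : Set (ProbabilityMeasure Ω))
    (μ : ProbabilityMeasure Ω) : Prop :=
  μ ∈ S ∧ ∀ μ₁ ∈ S, ∀ μ₂ ∈ S, ∀ t : ℝ, 0 < t → t < 1 →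
    (μ : Measure Ω) = ENNReal.ofReal t • (μ₁ : Measure Ω) +
      ENNReal.ofReal (1 - t) • (μ₂ : Measure Ω) → μ₁ = μ₂

/-- the class `Ω_w(A*, p)` -/
def OmegaW {A : Type} [Fintype A] (p : ℕ) (f : List A → ℝ) : Prop :=
  (∀ I, 0 ≤ f I ∧ f I ≤ 1) ∧
  ∃ c > (0:ℝ),
    (∀ n : ℕ, ∑ w : Fin n → A, f (List.ofFn w) = 1) ∧
    (∀ I J : List A, ∃ K : List A, K.length ≤ p ∧ c * (f I * f J) ≤ f (I ++ K ++ J)) ∧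
    (∀ I : List A, ∃ i j : A, c * f I ≤ f (i :: I) ∧ c * f I ≤ f (I ++ [j]))

/-- the class `Ω(A*, p)` -/
def OmegaS {A : Type} [Fintype A] (p : ℕ) (f : List A → ℝ) : Prop :=
  (∀ I, 0 ≤ f I ∧ f I ≤ 1) ∧
  ∃ c > (0:ℝ),
    (∀ n : ℕ, ∑ w : Fin n → A, f (List.ofFn w) = 1) ∧
    (∀ I J : List A, ∃ K : List A, K.length = p ∧ c * (f I * f J) ≤ f (I ++ K ++ J))

/-- `f_{m,n}(I)` -/
def fmn {A : Type} [Fintype A] (f : List A → ℝ) (m n : ℕ) (I : List A) : ℝ :=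
  ∑ u : Fin m → A, ∑ v : Fin n → A, f (List.ofFn u ++ I ++ List.ofFn v)

/-- `f*(I) = sup_{m,n} f_{m,n}(I)` -/
def fstar {A : Type} [Fintype A] (f : List A → ℝ) (I : List A) : ℝ :=
  ⨆ m : ℕ, ⨆ n : ℕ, fmn f m n I

/-- the class `D_w(X, p)` -/
def Dw {A : Type} (X : Set (ℕ → A)) (p : ℕ) (φ : List A → ℝ) : Prop :=
  (∀ I, Lang X I → 0 ≤ φ I) ∧ (∃ I, Lang X I ∧ I ≠ [] ∧ 0 < φ I) ∧
  ∃ c : ℝ, 0 < c ∧ c ≤ 1 ∧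
    (∀ I J : List A, Lang X (I ++ J) → φ (I ++ J) ≤ c⁻¹ * φ I * φ J) ∧
    (∀ I J : List A, Lang X I → Lang X J →
      ∃ K : List A, K.length ≤ p ∧ Lang X (I ++ K ++ J) ∧
        c * (φ I * φ J) ≤ φ (I ++ K ++ J))

/-- the class `D(X, p)` -/
def Ds {A : Type} (X : Set (ℕ → A)) (p : ℕ) (φ : List A → ℝ) : Prop :=
  (∀ I, Lang X I → 0 ≤ φ I) ∧ (∃ I, Lang X I ∧ I ≠ [] ∧ 0 < φ I) ∧
  ∃ c : ℝ, 0 < c ∧ c ≤ 1 ∧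
    (∀ I J : List A, Lang X (I ++ J) → φ (I ++ J) ≤ c⁻¹ * φ I * φ J) ∧
    (∀ I J : List A, Lang X I → Lang X J →
      ∃ K : List A, K.length = p ∧ Lang X (I ++ K ++ J) ∧
        c * (φ I * φ J) ≤ φ (I ++ K ++ J))

end

noncomputable section

/-- iterated one-block maps along a chain of alphabets: `tauFrom π j i : B j → B (j+i)` -/
def tauFrom {B : ℕ → Type} (π : ∀ i, B i → B (i+1)) (j : ℕ) : (i : ℕ) → B j → B (j + i)
  | 0 => id
  | (i+1) => fun a => π (j + i) (tauFrom π j i a)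

/-- weighted pressure value along a chain starting at index `j`, with `k` weights `w 0, …, w (k-1)` -/
def wValGen {B : ℕ → Type} [∀ i, Fintype (B i)] [∀ i, MeasurableSpace (B i)]
    (π : ∀ i, B i → B (i+1)) (X : ∀ i, Set (ℕ → B i)) (j k : ℕ) (w : ℕ → ℝ)
    (φ : ℕ → (ℕ → B j) → ℝ) (μ : ProbabilityMeasure (ℕ → B j)) : EReal :=
  PhiStar (μ : Measure (ℕ → B j)) φ +
    ((∑ i ∈ Finset.range k, w i *
      ent (X (j + i)) ((μ : Measure (ℕ → B j)).map (blockMap (tauFrom π j i))) : ℝ) : EReal)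

/-- weighted equilibrium states along a chain -/
def wEqSetGen {B : ℕ → Type} [∀ i, Fintype (B i)] [∀ i, MeasurableSpace (B i)]
    (π : ∀ i, B i → B (i+1)) (X : ∀ i, Set (ℕ → B i)) (j k : ℕ) (w : ℕ → ℝ)
    (φ : ℕ → (ℕ → B j) → ℝ) : Set (ProbabilityMeasure (ℕ → B j)) :=
  {μ | μ ∈ MInv (X j) ∧
    wValGen π X j k w φ μ = ⨆ η ∈ MInv (X j), wValGen π X j k w φ η}

end


/-! ### Finite entropy inequalities -/

lemma ws_logsum {ι : Type*} (s : Finset ι) (p q : ι → ℝ) (hp : ∀ i ∈ s, 0 ≤ p i)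
    (hq : ∀ i ∈ s, 0 ≤ q i) (h : ∀ i ∈ s, q i = 0 → p i = 0) :
    ∑ i ∈ s, (p i * Real.log (q i) + Real.negMulLog (p i)) ≤
      (∑ i ∈ s, p i) * Real.log (∑ i ∈ s, q i) + Real.negMulLog (∑ i ∈ s, p i) := by
  set P := ∑ i ∈ s, p i with hP
  set Q := ∑ i ∈ s, q i with hQ
  have hP0 : 0 ≤ P := Finset.sum_nonneg hp
  rcases hP0.eq_or_lt with h0 | h0
  · have hz : ∀ i ∈ s, p i = 0 := (Finset.sum_eq_zero_iff_of_nonneg hp).1 h0.symm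
    rw [← h0]
    simp only [zero_mul, Real.negMulLog_zero, add_zero]
    refine le_of_eq (Finset.sum_eq_zero fun i hi => ?_)
    rw [hz i hi]; simp
  · have hQ0 : 0 < Q := by
      obtain ⟨i, hi, hpi⟩ : ∃ i ∈ s, p i ≠ 0 := by
        by_contra hcon
        push Not at hcon
        exact h0.ne' (Finset.sum_eq_zero hcon)
      have hqi : 0 < q i := lt_of_le_of_ne (hq i hi) (fun hh => hpi (h i hi hh.symm))
      exact lt_of_lt_of_le hqi (Finset.single_le_sum hq hi)
    have key : ∀ i ∈ s, p i * Real.log (q i) + Real.negMulLog (p i) ≤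
        p i * (Real.log Q - Real.log P) + (q i * (P / Q) - p i) := by
      intro i hi
      rcases (hp i hi).eq_or_lt with h1 | h1
      · rw [← h1]; simp
        exact mul_nonneg (hq i hi) (div_nonneg h0.le hQ0.le)
      · have hqi : 0 < q i := lt_of_le_of_ne (hq i hi) (fun hh => h1.ne' (h i hi hh.symm))
        have := Real.log_le_sub_one_of_pos (x := q i * P / (p i * Q)) (by positivity)
        rw [Real.log_div (by positivity) (by positivity), Real.log_mul hqi.ne' h0.ne',
          Real.log_mul h1.ne' hQ0.ne'] at this
        have h2 := mul_le_mul_of_nonneg_left this h1.le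
        have h3 : p i * (q i * P / (p i * Q) - 1) = q i * (P / Q) - p i := by
          field_simp
        rw [h3] at h2
        unfold Real.negMulLog
        nlinarith
    refine (Finset.sum_le_sum key).trans (le_of_eq ?_)
    rw [Finset.sum_add_distrib, ← Finset.sum_mul, Finset.sum_sub_distrib, ← Finset.sum_mul,
      ← hP, ← hQ]
    unfold Real.negMulLog
    field_simp
    ring

lemma ws_negMulLog_add_le {a b : ℝ} (ha : 0 ≤ a) (hb : 0 ≤ b) :
    Real.negMulLog (a + b) ≤ Real.negMulLog a + Real.negMulLog b := by
  rcases ha.eq_or_lt with h | h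
  · rw [← h]; simp
  rcases hb.eq_or_lt with h' | h'
  · rw [← h']; simp
  have h1 := Real.log_le_log h (by linarith : a ≤ a + b)
  have h2 := Real.log_le_log h' (by linarith : b ≤ a + b)
  unfold Real.negMulLog
  nlinarith

/-- entropy of a finite valued random variable -/
noncomputable def ws_Hd {Ω ι : Type*} [MeasurableSpace Ω] [Fintype ι] (μ : Measure Ω)
    (f : Ω → ι) : ℝ := ∑ i, Real.negMulLog (μ.real (f ⁻¹' {i}))

section
variable {Ω ι κ : Type*} [MeasurableSpace Ω] [Fintype ι] [MeasurableSpace ι]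
  [DiscreteMeasurableSpace ι] [Fintype κ] [MeasurableSpace κ] [DiscreteMeasurableSpace κ]

lemma ws_integral_fin (μ : Measure Ω) [IsFiniteMeasure μ] {f : Ω → ι} (hf : Measurable f)
    (F : ι → ℝ) : ∫ x, F (f x) ∂μ = ∑ i, μ.real (f ⁻¹' {i}) * F i := by
  rw [← integral_map (φ := f) (f := F) hf.aemeasurable
    (Measurable.of_discrete.aestronglyMeasurable), integral_fintype .of_finite]
  refine Finset.sum_congr rfl fun i _ => ?_
  rw [map_measureReal_apply hf (MeasurableSet.of_discrete), smul_eq_mul]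

lemma ws_integrable_fin (μ : Measure Ω) [IsFiniteMeasure μ] {f : Ω → ι} (hf : Measurable f)
    (F : ι → ℝ) : Integrable (fun x => F (f x)) μ := by
  have : Integrable F (μ.map f) := .of_finite
  exact (integrable_map_measure Measurable.of_discrete.aestronglyMeasurable hf.aemeasurable).1 this

lemma ws_sum_one (μ : Measure Ω) [IsProbabilityMeasure μ] {f : Ω → ι} (hf : Measurable f) :
    ∑ i, μ.real (f ⁻¹' {i}) = 1 := by
  have := ws_integral_fin μ hf (fun _ => 1)
  simpa using this.symm

lemma ws_Hd_nonneg (μ : Measure Ω) [IsProbabilityMeasure μ] (f : Ω → ι) : 0 ≤ ws_Hd μ f :=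
  Finset.sum_nonneg fun _ _ => Real.negMulLog_nonneg measureReal_nonneg measureReal_le_one

lemma ws_Hd_le (μ : Measure Ω) [IsProbabilityMeasure μ] {f : Ω → ι} (hf : Measurable f) :
    ws_Hd μ f ≤ Real.log (Fintype.card ι) := by
  have := ws_logsum Finset.univ (fun i => μ.real (f ⁻¹' {i})) (fun _ => 1)
    (fun _ _ => measureReal_nonneg) (fun _ _ => zero_le_one) (fun _ _ h => by simp at h)
  simpa [ws_sum_one μ hf, ws_Hd] using this

lemma ws_Hd_prod (μ : Measure Ω) [IsProbabilityMeasure μ] {f : Ω → ι} {g : Ω → κ}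
    (hf : Measurable f) (hg : Measurable g) :
    ws_Hd μ (fun x => (f x, g x)) ≤ ws_Hd μ f + ws_Hd μ g := by
  set p : ι × κ → ℝ := fun i => μ.real ((fun x => (f x, g x)) ⁻¹' {i}) with hp
  set r : ι → ℝ := fun i => μ.real (f ⁻¹' {i}) with hr
  set s : κ → ℝ := fun i => μ.real (g ⁻¹' {i}) with hs
  have hpr : ∀ i j, p (i, j) ≤ r i := fun i j => measureReal_mono (by
    intro x hx; simp at hx; simp [hx.1])
  have hps : ∀ i j, p (i, j) ≤ s j := fun i j => measureReal_mono (by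
    intro x hx; simp at hx; simp [hx.2])
  have hp0 : ∀ i, 0 ≤ p i := fun _ => measureReal_nonneg
  have hr0 : ∀ i, 0 ≤ r i := fun _ => measureReal_nonneg
  have hs0 : ∀ i, 0 ≤ s i := fun _ => measureReal_nonneg
  have hfg : Measurable (fun x => (f x, g x)) := hf.prodMk hg
  have hp1 : ∑ i, p i = 1 := ws_sum_one μ hfg
  have hr1 : ∑ i, r i = 1 := ws_sum_one μ hf
  have hs1 : ∑ i, s i = 1 := ws_sum_one μ hg
  have hrs : ∑ i : ι × κ, r i.1 * s i.2 = 1 := by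
    rw [Fintype.sum_prod_type, ← Finset.sum_mul_sum, hr1, hs1, one_mul]
  have h1 := ws_logsum Finset.univ p (fun i => r i.1 * s i.2) (fun i _ => hp0 i)
    (fun i _ => mul_nonneg (hr0 _) (hs0 _)) (fun i _ h => by
      rcases mul_eq_zero.1 h with h | h
      · exact le_antisymm (h ▸ hpr i.1 i.2) (hp0 i)
      · exact le_antisymm (h ▸ hps i.1 i.2) (hp0 i))
  rw [hp1, hrs] at h1
  simp only [Real.log_one, mul_zero, Real.negMulLog_one, add_zero, Finset.sum_add_distrib] at h1
  have h2 : ∀ i ∈ (Finset.univ : Finset (ι × κ)), p i * Real.log (r i.1 * s i.2) =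
      p i * Real.log (r i.1) + p i * Real.log (s i.2) := by
    intro i _
    rcases (hp0 i).eq_or_lt with h | h
    · rw [← h]; simp
    · rw [Real.log_mul (h.trans_le (hpr i.1 i.2)).ne' (h.trans_le (hps i.1 i.2)).ne', mul_add]
  rw [Finset.sum_congr rfl h2, Finset.sum_add_distrib] at h1
  have h3 : ∑ i : ι × κ, p i * Real.log (r i.1) = - ws_Hd μ f := by
    have e1 := ws_integral_fin μ hfg (fun i => Real.log (r i.1))
    have e2 := ws_integral_fin μ hf (fun i => Real.log (r i))
    rw [← e1, e2]
    simp [ws_Hd, Real.negMulLog, hr]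
  have h4 : ∑ i : ι × κ, p i * Real.log (s i.2) = - ws_Hd μ g := by
    have e1 := ws_integral_fin μ hfg (fun i => Real.log (s i.2))
    have e2 := ws_integral_fin μ hg (fun i => Real.log (s i))
    rw [← e1, e2]
    simp [ws_Hd, Real.negMulLog, hs]
  rw [h3, h4] at h1
  have h5 : ws_Hd μ (fun x => (f x, g x)) = ∑ i, Real.negMulLog (p i) := rfl
  linarith

lemma ws_mix_real {μ μ₁ μ₂ : Measure Ω} [IsProbabilityMeasure μ₁] [IsProbabilityMeasure μ₂]
    {t : ℝ} (h0 : 0 ≤ t) (h1 : t ≤ 1)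
    (h : μ = ENNReal.ofReal t • μ₁ + ENNReal.ofReal (1 - t) • μ₂) (s : Set Ω) :
    μ.real s = t * μ₁.real s + (1 - t) * μ₂.real s := by
  subst h
  simp only [Measure.real, Measure.coe_add, Measure.coe_smul, Pi.add_apply, Pi.smul_apply,
    smul_eq_mul]
  rw [ENNReal.toReal_add (by finiteness) (by finiteness), ENNReal.toReal_mul, ENNReal.toReal_mul,
    ENNReal.toReal_ofReal h0, ENNReal.toReal_ofReal (by linarith)]

lemma ws_Hd_concave {μ μ₁ μ₂ : Measure Ω} [IsProbabilityMeasure μ₁] [IsProbabilityMeasure μ₂]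
    {t : ℝ} (h0 : 0 ≤ t) (h1 : t ≤ 1)
    (h : μ = ENNReal.ofReal t • μ₁ + ENNReal.ofReal (1 - t) • μ₂) (f : Ω → ι) :
    t * ws_Hd μ₁ f + (1 - t) * ws_Hd μ₂ f ≤ ws_Hd μ f := by
  unfold ws_Hd
  rw [Finset.mul_sum, Finset.mul_sum, ← Finset.sum_add_distrib]
  refine Finset.sum_le_sum fun i _ => ?_
  rw [ws_mix_real h0 h1 h]
  exact Real.concaveOn_negMulLog.2 (Set.mem_Ici.2 measureReal_nonneg)
    (Set.mem_Ici.2 measureReal_nonneg) h0 (by linarith) (by ring)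

lemma ws_Hd_convex {μ μ₁ μ₂ : Measure Ω} [IsProbabilityMeasure μ₁] [IsProbabilityMeasure μ₂]
    {t : ℝ} (h0 : 0 ≤ t) (h1 : t ≤ 1)
    (h : μ = ENNReal.ofReal t • μ₁ + ENNReal.ofReal (1 - t) • μ₂) {f : Ω → ι}
    (hf : Measurable f) :
    ws_Hd μ f ≤ t * ws_Hd μ₁ f + (1 - t) * ws_Hd μ₂ f +
      (Real.negMulLog t + Real.negMulLog (1 - t)) := by
  have e1 := ws_sum_one μ₁ hf
  have e2 := ws_sum_one μ₂ hf
  have : t * ws_Hd μ₁ f + (1 - t) * ws_Hd μ₂ f +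
      (Real.negMulLog t + Real.negMulLog (1 - t)) = ∑ i,
      ((μ₁.real (f ⁻¹' {i}) * Real.negMulLog t + t * Real.negMulLog (μ₁.real (f ⁻¹' {i}))) +
      (μ₂.real (f ⁻¹' {i}) * Real.negMulLog (1 - t) +
        (1 - t) * Real.negMulLog (μ₂.real (f ⁻¹' {i})))) := by
    simp only [Finset.sum_add_distrib, ← Finset.sum_mul, ← Finset.mul_sum, e1, e2, ws_Hd]
    ring
  rw [this]
  unfold ws_Hd
  refine Finset.sum_le_sum fun i _ => ?_
  rw [ws_mix_real h0 h1 h]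
  refine (ws_negMulLog_add_le (mul_nonneg h0 measureReal_nonneg)
    (mul_nonneg (by linarith) measureReal_nonneg)).trans (le_of_eq ?_)
  rw [Real.negMulLog_mul, Real.negMulLog_mul]

end

/-! ### Sequence spaces -/

/-- the first `n` coordinates -/
def ws_pre {A : Type} (n : ℕ) (x : ℕ → A) : Fin n → A := fun i => x i

lemma ws_shift_iter {A : Type} (i : ℕ) (x : ℕ → A) (n : ℕ) : (shiftMap^[i] x) n = x (n + i) := by
  induction i generalizing x with
  | zero => rfl
  | succ i ih => rw [Function.iterate_succ_apply, ih]; simp [shiftMap]; congr 1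

lemma ws_cyl {A : Type} {n : ℕ} (w : Fin n → A) : cyl (List.ofFn w) = ws_pre n ⁻¹' {w} := by
  ext x
  simp only [cyl, Set.mem_ofPred_eq, Set.mem_preimage, Set.mem_singleton_iff, ws_pre,
    List.get_eq_getElem, List.getElem_ofFn, funext_iff]
  constructor
  · intro h i
    exact h ⟨i, by simp⟩
  · intro h i
    exact h ⟨i, by simpa using i.2⟩

lemma ws_wordOf {A : Type} (x : ℕ → A) (n : ℕ) : wordOf x n = List.ofFn (ws_pre n x) := rfl

lemma ws_wordOf_add {A : Type} (x : ℕ → A) (m l : ℕ) :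
    wordOf x (m + l) = wordOf x m ++ wordOf (shiftMap^[m] x) l := by
  unfold wordOf
  rw [List.ofFn_add]
  congr 1
  congr 1
  funext i
  rw [ws_shift_iter]
  simp [add_comm]

lemma ws_lang_wordOf {A : Type} {X : Set (ℕ → A)} {x : ℕ → A} (hx : x ∈ X) (n : ℕ) :
    Lang X (wordOf x n) := ⟨x, by rw [ws_wordOf, ws_cyl]; simp, hx⟩

lemma ws_blockMap_shift {A B : Type} (τ : A → B) (i : ℕ) (x : ℕ → A) :
    blockMap τ (shiftMap^[i] x) = shiftMap^[i] (blockMap τ x) := by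
  funext n
  simp only [blockMap, ws_shift_iter]

lemma ws_blockMap_shift_one {A B : Type} (τ : A → B) (x : ℕ → A) :
    blockMap τ (shiftMap x) = shiftMap (blockMap τ x) := ws_blockMap_shift τ 1 x

lemma ws_shift_mem {A : Type} [TopologicalSpace A] {X : Set (ℕ → A)} (hX : IsSubshift X) (i : ℕ)
    {x : ℕ → A} (hx : x ∈ X) : shiftMap^[i] x ∈ X := by
  induction i with
  | zero => exact hx
  | succ i ih => rw [Function.iterate_succ_apply']; exact hX.2.2 ⟨_, ih, rfl⟩

/-- submultiplicativity data -/
structure ws_Sub {A : Type} (X : Set (ℕ → A)) (φ : List A → ℝ) (c : ℝ) : Prop where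
  c0 : 0 < c
  c1 : c ≤ 1
  nonneg : ∀ I, Lang X I → 0 ≤ φ I
  sub : ∀ I J : List A, Lang X (I ++ J) → φ (I ++ J) ≤ c⁻¹ * φ I * φ J

lemma ws_point {A : Type} [TopologicalSpace A] {X : Set (ℕ → A)} {φ : List A → ℝ} {c : ℝ}
    (hX : IsSubshift X) (h : ws_Sub X φ c) {x : ℕ → A} (hx : x ∈ X) (m l : ℕ)
    (hp : 0 < φ (wordOf x (m + l))) :
    0 < φ (wordOf x m) ∧ 0 < φ (wordOf (shiftMap^[m] x) l) ∧
    Real.log (φ (wordOf x (m + l))) ≤ Real.log (φ (wordOf x m)) +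
      Real.log (φ (wordOf (shiftMap^[m] x) l)) + Real.log c⁻¹ := by
  have h1 := h.nonneg _ (ws_lang_wordOf hx m)
  have h2 := h.nonneg _ (ws_lang_wordOf (ws_shift_mem hX m hx) l)
  have h3 := h.sub (wordOf x m) (wordOf (shiftMap^[m] x) l)
    (by rw [← ws_wordOf_add]; exact ws_lang_wordOf hx _)
  rw [← ws_wordOf_add] at h3
  have hc := h.c0
  have h4 : 0 < φ (wordOf x m) := h1.lt_of_ne (fun hh => by rw [← hh] at h3; simp at h3; linarith)
  have h5 : 0 < φ (wordOf (shiftMap^[m] x) l) :=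
    h2.lt_of_ne (fun hh => by rw [← hh] at h3; simp at h3; linarith)
  refine ⟨h4, h5, ?_⟩
  have := Real.log_le_log hp h3
  rw [Real.log_mul (by positivity) h5.ne', Real.log_mul (by positivity) h4.ne'] at this
  linarith

section
variable {Ω : Type*} {ι κ : Type*} [MeasurableSpace Ω] [Fintype ι] [Fintype κ]

lemma ws_Hd_equiv (μ : Measure Ω) (f : Ω → ι) (e : ι ≃ κ) :
    ws_Hd μ (fun x => e (f x)) = ws_Hd μ f := by
  unfold ws_Hd
  rw [← e.sum_comp]
  refine Finset.sum_congr rfl fun i _ => ?_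
  congr 2
  ext x; simp

lemma ws_Hd_map {Ω' : Type*} [MeasurableSpace Ω'] [MeasurableSpace ι] [DiscreteMeasurableSpace ι]
    (μ : Measure Ω) {g : Ω → Ω'} (hg : Measurable g) {f : Ω' → ι} (hf : Measurable f) :
    ws_Hd (μ.map g) f = ws_Hd μ (fun x => f (g x)) := by
  unfold ws_Hd
  refine Finset.sum_congr rfl fun i _ => ?_
  rw [map_measureReal_apply hg (hf (MeasurableSet.of_discrete))]
  rfl

lemma ws_intlog [MeasurableSpace ι] [DiscreteMeasurableSpace ι] (μ : Measure Ω)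
    [IsFiniteMeasure μ] {f : Ω → ι} (hf : Measurable f) (F : ι → ℝ) :
    intlog μ (fun x => F (f x)) = if ∀ᵐ x ∂μ, 0 < F (f x) then
      ((∫ x, Real.log (F (f x)) ∂μ : ℝ) : EReal) else ⊥ := by
  have hinteg : Integrable (fun x => Real.log (F (f x))) μ :=
    ws_integrable_fin μ hf (fun i => Real.log (F i))
  have hfin : ∫⁻ x, ENNReal.ofReal (Real.log (F (f x))) ∂μ ≠ ⊤ := by
    have := hinteg.lintegral_lt_top
    exact this.ne
  have hfin' : ∫⁻ x, ENNReal.ofReal (-Real.log (F (f x))) ∂μ ≠ ⊤ := by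
    have := hinteg.neg.lintegral_lt_top
    exact this.ne
  unfold intlog
  split_ifs with h
  · have e : ∫⁻ x, (if F (f x) ≤ 0 then (⊤ : ℝ≥0∞) else
        ENNReal.ofReal (-Real.log (F (f x)))) ∂μ =
        ∫⁻ x, ENNReal.ofReal (-Real.log (F (f x))) ∂μ := by
      refine lintegral_congr_ae ?_
      filter_upwards [h] with x hx
      rw [if_neg (not_le.2 hx)]
    rw [e, integral_eq_lintegral_pos_part_sub_lintegral_neg_part hinteg]
    rw [EReal.coe_sub, EReal.coe_ennreal_toReal hfin, EReal.coe_ennreal_toReal hfin']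
  · have e : ∫⁻ x, (if F (f x) ≤ 0 then (⊤ : ℝ≥0∞) else
        ENNReal.ofReal (-Real.log (F (f x)))) ∂μ = ⊤ := by
      by_contra hcon
      apply h
      have hm : Measurable (fun x => (if F (f x) ≤ 0 then (⊤ : ℝ≥0∞) else
        ENNReal.ofReal (-Real.log (F (f x))))) :=
        (Measurable.of_discrete (f := fun i => if F i ≤ 0 then (⊤ : ℝ≥0∞) else
          ENNReal.ofReal (-Real.log (F i)))).comp hf
      filter_upwards [ae_lt_top hm hcon] with x hx
      by_contra hx'
      rw [if_pos (not_lt.1 hx')] at hx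
      exact lt_irrefl _ hx
    rw [e]
    have : ((⊤ : ℝ≥0∞) : EReal) = ⊤ := rfl
    rw [this, EReal.sub_top]

end

lemma ws_fekete {u : ℕ → ℝ} (h : Subadditive u) :
    Tendsto (fun n => ((u n / n : ℝ) : EReal)) atTop
      (𝓝 (⨅ n : {n : ℕ // n ≠ 0}, ((u n / (n : ℕ) : ℝ) : EReal))) := by
  refine tendsto_order.2 ⟨fun a ha => ?_, fun a ha => ?_⟩
  · filter_upwards [eventually_ne_atTop 0] with n hn
    exact ha.trans_le (iInf_le (fun n : {n : ℕ // n ≠ 0} => ((u n / (n : ℕ) : ℝ) : EReal)) ⟨n, hn⟩)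
  · obtain ⟨⟨n, hn⟩, hlt⟩ := iInf_lt_iff.1 ha
    obtain ⟨L, hL1, hL2⟩ := EReal.lt_iff_exists_real_btwn.1 hlt
    filter_upwards [h.eventually_div_lt_of_div_lt hn (EReal.coe_lt_coe_iff.1 hL1)] with p hp
    exact (EReal.coe_lt_coe_iff.2 hp).trans hL2

section
variable {A : Type} [Fintype A] [TopologicalSpace A] [DiscreteTopology A] [MeasurableSpace A]
  [BorelSpace A]

/-- block entropy without restriction to `X` -/
noncomputable def ws_Hn (μ : Measure (ℕ → A)) (n : ℕ) : ℝ := ws_Hd μ (ws_pre n)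


lemma ws_meas_shift : Measurable (shiftMap : (ℕ → A) → (ℕ → A)) :=
  measurable_pi_lambda _ fun n => measurable_pi_apply (n + 1)

lemma ws_meas_iter (i : ℕ) : Measurable (shiftMap^[i] : (ℕ → A) → (ℕ → A)) :=
  ws_meas_shift.iterate i

lemma ws_meas_pre (n : ℕ) : Measurable (ws_pre n : (ℕ → A) → (Fin n → A)) :=
  measurable_pi_lambda _ fun i => measurable_pi_apply (i : ℕ)

lemma ws_cont_pre (n : ℕ) : Continuous (ws_pre n : (ℕ → A) → (Fin n → A)) :=
  continuous_pi fun i => continuous_apply (i : ℕ)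

lemma ws_cont_shift : Continuous (shiftMap : (ℕ → A) → (ℕ → A)) :=
  continuous_pi fun i => continuous_apply (i + 1)

lemma ws_cont_block {B : Type} [TopologicalSpace B] (τ : A → B) :
    Continuous (blockMap τ : (ℕ → A) → (ℕ → B)) :=
  continuous_pi fun i => continuous_of_discreteTopology.comp (continuous_apply i)

lemma ws_meas_block {B : Type} [MeasurableSpace B] (τ : A → B) :
    Measurable (blockMap τ : (ℕ → A) → (ℕ → B)) :=
  measurable_pi_lambda _ fun i => (Measurable.of_discrete).comp (measurable_pi_apply i)

lemma ws_measX {X : Set (ℕ → A)} (hX : IsSubshift X) : MeasurableSet X :=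
  hX.2.1.isClosed.measurableSet

lemma ws_ae_X {X : Set (ℕ → A)} (hX : IsSubshift X) {μ : Measure (ℕ → A)}
    [IsProbabilityMeasure μ] (h : μ X = 1) : ∀ᵐ x ∂μ, x ∈ X :=
  (prob_compl_eq_zero_iff (ws_measX hX)).2 h

lemma ws_Hblock {X : Set (ℕ → A)} (hX : IsSubshift X) {μ : Measure (ℕ → A)}
    [IsProbabilityMeasure μ] (h : μ X = 1) (n : ℕ) : Hblock X μ n = ws_Hn μ n := by
  unfold Hblock ws_Hn ws_Hd
  rw [← Finset.sum_neg_distrib]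
  refine Finset.sum_congr rfl fun w _ => ?_
  have : mw X μ (List.ofFn w) = μ.real (ws_pre n ⁻¹' {w}) := by
    unfold mw
    rw [ws_cyl]
    unfold Measure.real
    congr 1
    refine measure_congr ?_
    filter_upwards [ws_ae_X hX h] with x hx
    exact propext ⟨fun h => h.1, fun h => ⟨h, hx⟩⟩
  rw [this, Real.negMulLog, neg_mul]

lemma ws_Hn_nonneg (μ : Measure (ℕ → A)) [IsProbabilityMeasure μ] (n : ℕ) : 0 ≤ ws_Hn μ n :=
  ws_Hd_nonneg μ _

lemma ws_Hn_le (μ : Measure (ℕ → A)) [IsProbabilityMeasure μ] (n : ℕ) :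
    ws_Hn μ n ≤ Real.log (Fintype.card (Fin n → A)) := ws_Hd_le μ (ws_meas_pre n)

lemma ws_Hn_add (μ : Measure (ℕ → A)) [IsProbabilityMeasure μ] (m l : ℕ) :
    ws_Hn μ (m + l) ≤ ws_Hn μ m + ws_Hn (μ.map shiftMap^[m]) l := by
  unfold ws_Hn
  rw [ws_Hd_map μ (ws_meas_iter m) (ws_meas_pre l)]
  have h1 := ws_Hd_prod μ (ws_meas_pre m) ((ws_meas_pre l).comp (ws_meas_iter (A := A) m))
  have h2 := ws_Hd_equiv μ (fun x : ℕ → A => (ws_pre m x, ws_pre l (shiftMap^[m] x)))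
    (Fin.appendEquiv m l)
  have h3 : (fun x : ℕ → A => (Fin.appendEquiv m l) (ws_pre m x, ws_pre l (shiftMap^[m] x))) =
      ws_pre (m + l) := by
    funext x i
    refine Fin.addCases (fun i => ?_) (fun i => ?_) i
    · simp [Fin.appendEquiv, ws_pre]
    · simp [Fin.appendEquiv, ws_pre, ws_shift_iter, add_comm]
  rw [h3] at h2
  rw [h2]
  exact h1

lemma ws_map_iter {μ : Measure (ℕ → A)} (h : μ.map shiftMap = μ) (m : ℕ) :
    μ.map shiftMap^[m] = μ := by
  induction m with
  | zero => simp
  | succ m ih =>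
    rw [Function.iterate_succ, ← Measure.map_map (ws_meas_iter m) ws_meas_shift, h, ih]

lemma ws_Hn_zero (μ : Measure (ℕ → A)) [IsProbabilityMeasure μ] : ws_Hn μ 0 = 0 := by
  refine le_antisymm ((ws_Hn_le μ 0).trans ?_) (ws_Hn_nonneg μ 0)
  simp

lemma ws_ent {X : Set (ℕ → A)} (hX : IsSubshift X) {μ : Measure (ℕ → A)}
    [IsProbabilityMeasure μ] (h : μ X = 1) (hinv : μ.map shiftMap = μ) :
    Tendsto (fun n : ℕ => ws_Hn μ n / n) atTop (𝓝 (ent X μ)) := by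
  have hs : Subadditive (ws_Hn μ) := fun m l => by
    have := ws_Hn_add μ m l
    rwa [ws_map_iter hinv] at this
  have hb : BddBelow (Set.range fun n : ℕ => ws_Hn μ n / n) :=
    ⟨0, by rintro _ ⟨n, rfl⟩; exact div_nonneg (ws_Hn_nonneg μ n) (Nat.cast_nonneg n)⟩
  have ht := hs.tendsto_lim hb
  have : ent X μ = hs.lim := by
    unfold ent
    simp_rw [ws_Hblock hX h]
    exact ht.liminf_eq
  rw [this]
  exact ht

/-- the integral of `log φ_n` -/
noncomputable def ws_S (φ : List A → ℝ) (μ : Measure (ℕ → A)) (n : ℕ) : ℝ :=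
  ∫ x, Real.log (φ (wordOf x n)) ∂μ

/-- `φ_n > 0` almost everywhere -/
def ws_G (φ : List A → ℝ) (μ : Measure (ℕ → A)) (n : ℕ) : Prop :=
  ∀ᵐ x ∂μ, 0 < φ (wordOf x n)

lemma ws_S_sum (φ : List A → ℝ) (μ : Measure (ℕ → A)) [IsFiniteMeasure μ] (n : ℕ) :
    ws_S φ μ n = ∑ w : Fin n → A, μ.real (ws_pre n ⁻¹' {w}) * Real.log (φ (List.ofFn w)) :=
  ws_integral_fin μ (ws_meas_pre n) (fun w => Real.log (φ (List.ofFn w)))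

lemma ws_S_int (φ : List A → ℝ) (μ : Measure (ℕ → A)) [IsFiniteMeasure μ] (n : ℕ) :
    Integrable (fun x => Real.log (φ (wordOf x n))) μ :=
  ws_integrable_fin μ (ws_meas_pre n) (fun w => Real.log (φ (List.ofFn w)))

lemma ws_S_map (φ : List A → ℝ) (μ : Measure (ℕ → A)) [IsFiniteMeasure μ] (n : ℕ) {B : Type}
    [Fintype B] [TopologicalSpace B] [DiscreteTopology B] [MeasurableSpace B] [BorelSpace B]
    {g : (ℕ → B) → (ℕ → A)} (hg : Measurable g) (η : Measure (ℕ → B)) [IsFiniteMeasure η] :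
    ws_S φ (η.map g) n = ∫ x, Real.log (φ (wordOf (g x) n)) ∂η := by
  unfold ws_S
  rw [integral_map hg.aemeasurable]
  exact (Measurable.of_discrete.comp (ws_meas_pre n) :
    Measurable ((fun w => Real.log (φ (List.ofFn w))) ∘ ws_pre n)).aestronglyMeasurable

lemma ws_G_iff (φ : List A → ℝ) (μ : Measure (ℕ → A)) [IsFiniteMeasure μ] (n : ℕ) :
    ws_G φ μ n ↔ ∀ w : Fin n → A, φ (List.ofFn w) ≤ 0 → μ.real (ws_pre n ⁻¹' {w}) = 0 := by
  unfold ws_G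
  constructor
  · intro h w hw
    rw [measureReal_eq_zero_iff]
    refine measure_mono_null ?_ h
    intro x hx
    simp only [Set.mem_preimage, Set.mem_singleton_iff] at hx
    simp only [Set.mem_compl_iff, Set.mem_ofPred_eq, not_lt, ws_wordOf, hx]
    exact hw
  · intro h
    have : ∀ᵐ x ∂μ, ∀ w : Fin n → A, φ (List.ofFn w) ≤ 0 → ws_pre n x ≠ w := by
      rw [ae_all_iff]
      intro w
      by_cases hw : φ (List.ofFn w) ≤ 0
      · have := h w hw
        rw [measureReal_eq_zero_iff] at this
        have h2 : ∀ᵐ x ∂μ, x ∉ ws_pre n ⁻¹' {w} := measure_eq_zero_iff_ae_notMem.1 this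
        filter_upwards [h2] with x hx _ hcon
        exact hx hcon
      · exact Eventually.of_forall fun x hx => absurd hx hw
    filter_upwards [this] with x hx
    by_contra hcon
    exact hx _ (not_lt.1 hcon) rfl

lemma ws_G_map_iter (φ : List A → ℝ) (μ : Measure (ℕ → A)) (i m : ℕ) :
    ws_G φ (μ.map shiftMap^[i]) m ↔ ∀ᵐ x ∂μ, 0 < φ (wordOf (shiftMap^[i] x) m) := by
  unfold ws_G
  rw [ae_map_iff (ws_meas_iter i).aemeasurable]
  exact (Measurable.of_discrete.comp (ws_meas_pre m) :
    Measurable ((fun w => 0 < φ (List.ofFn w)) ∘ ws_pre m)).setOf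

lemma ws_G_sub {X : Set (ℕ → A)} {φ : List A → ℝ} {c : ℝ} (hX : IsSubshift X)
    (h : ws_Sub X φ c) {μ : Measure (ℕ → A)} (hμ : ∀ᵐ x ∂μ, x ∈ X) {N i m : ℕ}
    (hi : i + m ≤ N) (hG : ws_G φ μ N) : ws_G φ (μ.map shiftMap^[i]) m := by
  rw [ws_G_map_iter]
  obtain ⟨l, rfl⟩ := Nat.exists_eq_add_of_le hi
  filter_upwards [hμ, hG] with x hx hx'
  rw [add_assoc] at hx'
  exact (ws_point hX h (ws_shift_mem hX i hx) m l (ws_point hX h hx i (m + l) hx').2.1).1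

lemma ws_S_add {X : Set (ℕ → A)} {φ : List A → ℝ} {c : ℝ} (hX : IsSubshift X)
    (h : ws_Sub X φ c) {μ : Measure (ℕ → A)} [IsProbabilityMeasure μ] (hμ : ∀ᵐ x ∂μ, x ∈ X)
    (m l : ℕ) (hG : ws_G φ μ (m + l)) :
    ws_S φ μ (m + l) ≤ ws_S φ μ m + ws_S φ (μ.map shiftMap^[m]) l + Real.log c⁻¹ := by
  rw [ws_S_map φ μ l (ws_meas_iter m) μ]
  unfold ws_S
  have i1 := ws_S_int φ μ m
  have i2 : Integrable (fun x => Real.log (φ (wordOf (shiftMap^[m] x) l))) μ :=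
    ws_integrable_fin μ ((ws_meas_pre l).comp (ws_meas_iter m))
      (fun w => Real.log (φ (List.ofFn w)))
  have : ∫ x, (Real.log (φ (wordOf x m)) + Real.log (φ (wordOf (shiftMap^[m] x) l)) +
      Real.log c⁻¹) ∂μ = ∫ x, Real.log (φ (wordOf x m)) ∂μ +
      ∫ x, Real.log (φ (wordOf (shiftMap^[m] x) l)) ∂μ + Real.log c⁻¹ := by
    have e1 := integral_add (i1.add i2) (integrable_const (μ := μ) (Real.log c⁻¹))
    have e2 := integral_add i1 i2
    simp only [Pi.add_apply] at e1 e2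
    rw [e1, e2]
    simp
  rw [← this]
  refine integral_mono_ae (ws_S_int φ μ _) ((i1.add i2).add (integrable_const _)) ?_
  filter_upwards [hμ, hG] with x hx hx'
  exact (ws_point hX h hx m l hx').2.2

lemma ws_Phi_term (φ : List A → ℝ) (μ : Measure (ℕ → A)) [IsFiniteMeasure μ] {n : ℕ}
    (hn : n ≠ 0) : (((n : ℝ)⁻¹ : ℝ) : EReal) * intlog μ (genPot φ n) =
      if ws_G φ μ n then ((ws_S φ μ n / n : ℝ) : EReal) else ⊥ := by
  have := ws_intlog μ (ws_meas_pre (A := A) n) (fun w => φ (List.ofFn w))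
  have e : intlog μ (genPot φ n) = if ws_G φ μ n then ((ws_S φ μ n : ℝ) : EReal) else ⊥ := this
  rw [e]
  split_ifs
  · rw [← EReal.coe_mul, div_eq_inv_mul]
  · exact EReal.coe_mul_bot_of_pos (by positivity)

lemma ws_Phi_bad (φ : List A → ℝ) (μ : Measure (ℕ → A)) [IsFiniteMeasure μ]
    (h : ∃ᶠ n in atTop, ¬ ws_G φ μ n) : PhiStar μ (genPot φ) = ⊥ := by
  unfold PhiStar
  rw [eq_bot_iff]
  refine liminf_le_of_frequently_le ?_
  refine (h.and_eventually (eventually_ne_atTop 0)).mono fun n hn => ?_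
  rw [ws_Phi_term φ μ hn.2, if_neg hn.1]

lemma ws_Phi_good (φ : List A → ℝ) (μ : Measure (ℕ → A)) [IsFiniteMeasure μ]
    (h : ∀ᶠ n in atTop, ws_G φ μ n) : PhiStar μ (genPot φ) =
      liminf (fun n : ℕ => ((ws_S φ μ n / n : ℝ) : EReal)) atTop := by
  unfold PhiStar
  refine liminf_congr ?_
  filter_upwards [h, eventually_ne_atTop 0] with n hn hn'
  rw [ws_Phi_term φ μ hn', if_pos hn]

lemma ws_cont_real {n : ℕ} (w : Fin n → A) : Continuous
    (fun μ : ProbabilityMeasure (ℕ → A) => (μ : Measure (ℕ → A)).real (ws_pre n ⁻¹' {w})) := by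
  rw [continuous_iff_continuousAt]
  intro μ
  have hcl : IsClopen (ws_pre n ⁻¹' {w}) := (isClopen_discrete {w}).preimage (ws_cont_pre n)
  have := ProbabilityMeasure.tendsto_measure_of_null_frontier_of_tendsto
    (tendsto_id (x := 𝓝 μ)) (E := ws_pre n ⁻¹' {w}) (by simp [hcl.frontier_eq])
  exact (NNReal.tendsto_coe.2 this)

lemma ws_cont_Hn (n : ℕ) :
    Continuous (fun μ : ProbabilityMeasure (ℕ → A) => ws_Hn (μ : Measure (ℕ → A)) n) :=
  continuous_finsetSum _ fun w _ => Real.continuous_negMulLog.comp (ws_cont_real w)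

lemma ws_cont_S (φ : List A → ℝ) (n : ℕ) :
    Continuous (fun μ : ProbabilityMeasure (ℕ → A) => ws_S φ (μ : Measure (ℕ → A)) n) := by
  simp_rw [ws_S_sum]
  exact continuous_finsetSum _ fun w _ => (ws_cont_real w).mul continuous_const

lemma ws_ext {μ ν : Measure (ℕ → A)} [IsProbabilityMeasure μ] [IsProbabilityMeasure ν]
    (h : ∀ (n : ℕ) (w : Fin n → A), μ.real (ws_pre n ⁻¹' {w}) = ν.real (ws_pre n ⁻¹' {w})) :
    μ = ν := by
  have hmap : ∀ n, μ.map (ws_pre n) = ν.map (ws_pre n) := by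
    intro n
    refine Measure.ext_of_singleton fun w => ?_
    rw [Measure.map_apply (ws_meas_pre n) .of_discrete, Measure.map_apply (ws_meas_pre n)
      .of_discrete]
    exact (measureReal_eq_measureReal_iff).1 (h n w)
  have hpre : ∀ n (s : Set (Fin n → A)), μ (ws_pre n ⁻¹' s) = ν (ws_pre n ⁻¹' s) := by
    intro n s
    rw [← Measure.map_apply (ws_meas_pre n) .of_discrete, hmap, Measure.map_apply (ws_meas_pre n)
      .of_discrete]
  refine ext_of_generate_finite {t | ∃ n, ∃ s : Set (Fin n → A), t = ws_pre n ⁻¹' s} ?_ ?_ ?_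
    (by simp)
  · refine le_antisymm ?_ (MeasurableSpace.generateFrom_le ?_)
    · refine iSup_le fun i => ?_
      rintro _ ⟨s, hs, rfl⟩
      refine MeasurableSpace.measurableSet_generateFrom ⟨i + 1, {w | w (Fin.last i) ∈ s}, ?_⟩
      ext x; simp [ws_pre]
    · rintro _ ⟨n, s, rfl⟩
      exact ws_meas_pre n .of_discrete
  · rintro _ ⟨n, s, rfl⟩ _ ⟨m, t, rfl⟩ _
    refine ⟨max n m, {w | (fun i : Fin n => w ⟨i, by omega⟩) ∈ s ∧
      (fun i : Fin m => w ⟨i, by omega⟩) ∈ t}, ?_⟩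
    ext x; rfl
  · rintro _ ⟨n, s, rfl⟩
    exact hpre n s

end

/-! ### The weighted pressure value -/

section
variable {B : ℕ → Type} [∀ i, Fintype (B i)] [∀ i, TopologicalSpace (B i)]
  [∀ i, DiscreteTopology (B i)] [∀ i, MeasurableSpace (B i)] [∀ i, BorelSpace (B i)]

/-- the weighted block entropy -/
noncomputable def ws_E (π : ∀ i, B i → B (i+1)) (j k : ℕ) (w : ℕ → ℝ) (μ : Measure (ℕ → B j))
    (n : ℕ) : ℝ :=
  ∑ i ∈ Finset.range k, w i * ws_Hn (μ.map (blockMap (tauFrom π j i))) n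

/-- the weighted pressure at level `n` -/
noncomputable def ws_V (π : ∀ i, B i → B (i+1)) (j k : ℕ) (w : ℕ → ℝ) (φ : List (B j) → ℝ)
    (c : ℝ) (μ : Measure (ℕ → B j)) (n : ℕ) : ℝ :=
  ws_S φ μ n + Real.log c⁻¹ + ws_E π j k w μ n

/-- chain hypotheses -/
structure ws_Chain (π : ∀ i, B i → B (i+1)) (X : ∀ i, Set (ℕ → B i)) (j k : ℕ) (w : ℕ → ℝ) :
    Prop where
  sub : IsSubshift (X j)
  subs : ∀ i < k, IsSubshift (X (j + i))
  maps : ∀ i < k, ∀ x ∈ X j, blockMap (tauFrom π j i) x ∈ X (j + i)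
  w0 : ∀ i < k, 0 ≤ w i

variable {π : ∀ i, B i → B (i+1)} {X : ∀ i, Set (ℕ → B i)} {j k : ℕ} {w : ℕ → ℝ}

lemma ws_prob_map {A C : Type} [Fintype A] [TopologicalSpace A] [DiscreteTopology A]
    [MeasurableSpace A] [BorelSpace A] [MeasurableSpace C] (μ : Measure (ℕ → A))
    [IsProbabilityMeasure μ] (τ : A → C) : IsProbabilityMeasure (μ.map (blockMap τ)) :=
  Measure.isProbabilityMeasure_map (ws_meas_block τ).aemeasurable

lemma ws_prob_iter {A : Type} [Fintype A] [TopologicalSpace A] [DiscreteTopology A]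
    [MeasurableSpace A] [BorelSpace A] (μ : Measure (ℕ → A))
    [IsProbabilityMeasure μ] (i : ℕ) : IsProbabilityMeasure (μ.map shiftMap^[i]) :=
  Measure.isProbabilityMeasure_map (ws_meas_iter i).aemeasurable

lemma ws_map_comm {A C : Type} [Fintype A] [TopologicalSpace A] [DiscreteTopology A]
    [MeasurableSpace A] [BorelSpace A] [Fintype C] [TopologicalSpace C] [DiscreteTopology C]
    [MeasurableSpace C] [BorelSpace C] (μ : Measure (ℕ → A)) (τ : A → C) (m : ℕ) :
    (μ.map (blockMap τ)).map shiftMap^[m] = (μ.map shiftMap^[m]).map (blockMap τ) := by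
  rw [Measure.map_map (ws_meas_iter m) (ws_meas_block τ),
    Measure.map_map (ws_meas_block τ) (ws_meas_iter m)]
  congr 1
  funext x
  exact (ws_blockMap_shift τ m x).symm

lemma ws_E_add (h : ws_Chain π X j k w) (μ : Measure (ℕ → B j)) [IsProbabilityMeasure μ]
    (m l : ℕ) : ws_E π j k w μ (m + l) ≤
      ws_E π j k w μ m + ws_E π j k w (μ.map shiftMap^[m]) l := by
  unfold ws_E
  rw [← Finset.sum_add_distrib]
  refine Finset.sum_le_sum fun i hi => ?_
  rw [← mul_add]
  have := ws_prob_map μ (tauFrom π j i)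
  have h1 := ws_Hn_add (μ.map (blockMap (tauFrom π j i))) m l
  rw [ws_map_comm] at h1
  exact mul_le_mul_of_nonneg_left h1 (h.w0 i (Finset.mem_range.1 hi))

lemma ws_E_nonneg (h : ws_Chain π X j k w) (μ : Measure (ℕ → B j)) [IsProbabilityMeasure μ]
    (m : ℕ) : 0 ≤ ws_E π j k w μ m :=
  Finset.sum_nonneg fun i hi => by
    have := ws_prob_map μ (tauFrom π j i)
    exact mul_nonneg (h.w0 i (Finset.mem_range.1 hi)) (ws_Hn_nonneg _ m)

lemma ws_map_mix {Ω Ω' : Type*} [MeasurableSpace Ω] [MeasurableSpace Ω'] {μ μ₁ μ₂ : Measure Ω}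
    {s t : ℝ≥0∞} (h : μ = s • μ₁ + t • μ₂) {f : Ω → Ω'} (hf : Measurable f) :
    μ.map f = s • μ₁.map f + t • μ₂.map f := by
  subst h
  rw [Measure.map_add _ _ hf, Measure.map_smul, Measure.map_smul]

lemma ws_E_concave (h : ws_Chain π X j k w) {μ μ₁ μ₂ : Measure (ℕ → B j)}
    [IsProbabilityMeasure μ₁] [IsProbabilityMeasure μ₂]
    {t : ℝ} (h0 : 0 ≤ t) (h1 : t ≤ 1)
    (hm : μ = ENNReal.ofReal t • μ₁ + ENNReal.ofReal (1 - t) • μ₂) (n : ℕ) :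
    t * ws_E π j k w μ₁ n + (1 - t) * ws_E π j k w μ₂ n ≤ ws_E π j k w μ n := by
  unfold ws_E
  rw [Finset.mul_sum, Finset.mul_sum, ← Finset.sum_add_distrib]
  refine Finset.sum_le_sum fun i hi => ?_
  have := ws_prob_map μ₁ (tauFrom π j i)
  have := ws_prob_map μ₂ (tauFrom π j i)
  have h2 := ws_Hd_concave h0 h1 (ws_map_mix hm (ws_meas_block (tauFrom π j i))) (ws_pre n)
  have h3 := mul_le_mul_of_nonneg_left h2 (h.w0 i (Finset.mem_range.1 hi))
  unfold ws_Hn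
  linarith

lemma ws_E_convex (h : ws_Chain π X j k w) {μ μ₁ μ₂ : Measure (ℕ → B j)}
    [IsProbabilityMeasure μ₁] [IsProbabilityMeasure μ₂]
    {t : ℝ} (h0 : 0 ≤ t) (h1 : t ≤ 1)
    (hm : μ = ENNReal.ofReal t • μ₁ + ENNReal.ofReal (1 - t) • μ₂) (n : ℕ) :
    ws_E π j k w μ n ≤ t * ws_E π j k w μ₁ n + (1 - t) * ws_E π j k w μ₂ n +
      (∑ i ∈ Finset.range k, w i) * (Real.negMulLog t + Real.negMulLog (1 - t)) := by
  unfold ws_E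
  rw [Finset.mul_sum, Finset.mul_sum, Finset.sum_mul, ← Finset.sum_add_distrib,
    ← Finset.sum_add_distrib]
  refine Finset.sum_le_sum fun i hi => ?_
  have := ws_prob_map μ₁ (tauFrom π j i)
  have := ws_prob_map μ₂ (tauFrom π j i)
  have h2 := ws_Hd_convex h0 h1 (ws_map_mix hm (ws_meas_block (tauFrom π j i))) (ws_meas_pre n)
  have h3 := mul_le_mul_of_nonneg_left h2 (h.w0 i (Finset.mem_range.1 hi))
  unfold ws_Hn
  linarith

lemma ws_S_mix {A : Type} [Fintype A] [TopologicalSpace A] [DiscreteTopology A]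
    [MeasurableSpace A] [BorelSpace A] (φ : List A → ℝ) {μ μ₁ μ₂ : Measure (ℕ → A)}
    [IsProbabilityMeasure μ] [IsProbabilityMeasure μ₁] [IsProbabilityMeasure μ₂]
    {t : ℝ} (h0 : 0 ≤ t) (h1 : t ≤ 1)
    (hm : μ = ENNReal.ofReal t • μ₁ + ENNReal.ofReal (1 - t) • μ₂) (n : ℕ) :
    ws_S φ μ n = t * ws_S φ μ₁ n + (1 - t) * ws_S φ μ₂ n := by
  rw [ws_S_sum, ws_S_sum, ws_S_sum, Finset.mul_sum, Finset.mul_sum, ← Finset.sum_add_distrib]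
  refine Finset.sum_congr rfl fun i _ => ?_
  rw [ws_mix_real h0 h1 hm]
  ring

lemma ws_cont_E (n : ℕ) : Continuous
    (fun μ : ProbabilityMeasure (ℕ → B j) => ws_E π j k w (μ : Measure (ℕ → B j)) n) := by
  unfold ws_E
  refine continuous_finsetSum _ fun i _ => continuous_const.mul ?_
  exact (ws_cont_Hn n).comp (ProbabilityMeasure.continuous_map (ws_cont_block (tauFrom π j i)))

lemma ws_cont_V (φ : List (B j) → ℝ) (c : ℝ) (n : ℕ) : Continuous
    (fun μ : ProbabilityMeasure (ℕ → B j) => ws_V π j k w φ c (μ : Measure (ℕ → B j)) n) :=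
  ((ws_cont_S φ n).add continuous_const).add (ws_cont_E n)

lemma ws_push_inv {A C : Type} [Fintype A] [TopologicalSpace A] [DiscreteTopology A]
    [MeasurableSpace A] [BorelSpace A] [Fintype C] [TopologicalSpace C] [DiscreteTopology C]
    [MeasurableSpace C] [BorelSpace C] {μ : Measure (ℕ → A)} (h : μ.map shiftMap = μ)
    (τ : A → C) : (μ.map (blockMap τ)).map shiftMap = μ.map (blockMap τ) := by
  have := ws_map_comm μ τ 1
  simp only [Function.iterate_one] at this
  rw [this, h]

lemma ws_push_supp {A C : Type} [Fintype A] [TopologicalSpace A] [DiscreteTopology A]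
    [MeasurableSpace A] [BorelSpace A] [Fintype C] [TopologicalSpace C] [DiscreteTopology C]
    [MeasurableSpace C] [BorelSpace C] {μ : Measure (ℕ → A)} [IsProbabilityMeasure μ]
    {Y : Set (ℕ → A)} {Z : Set (ℕ → C)} (hY : μ Y = 1) (hZ : IsSubshift Z)
    (τ : A → C) (hτ : ∀ x ∈ Y, blockMap τ x ∈ Z) : (μ.map (blockMap τ)) Z = 1 := by
  rw [Measure.map_apply (ws_meas_block τ) (ws_measX hZ)]
  refine le_antisymm prob_le_one ?_
  rw [← hY]
  exact measure_mono hτ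

lemma ws_E_tendsto (h : ws_Chain π X j k w) {μ : ProbabilityMeasure (ℕ → B j)}
    (hμ : μ ∈ MInv (X j)) :
    Tendsto (fun n : ℕ => ws_E π j k w (μ : Measure (ℕ → B j)) n / n) atTop
      (𝓝 (∑ i ∈ Finset.range k, w i *
      ent (X (j + i)) ((μ : Measure (ℕ → B j)).map (blockMap (tauFrom π j i))))) := by
  unfold ws_E
  simp_rw [Finset.sum_div]
  refine tendsto_finsetSum _ fun i hi => ?_
  have hi := Finset.mem_range.1 hi
  simp_rw [mul_div_assoc]
  have := ws_prob_map (μ : Measure (ℕ → B j)) (tauFrom π j i)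
  exact (ws_ent (h.subs i hi) (ws_push_supp hμ.2 (h.subs i hi) _ (h.maps i hi))
    (ws_push_inv hμ.1 _)).const_mul _

lemma ws_Gall {A : Type} [Fintype A] [TopologicalSpace A] [DiscreteTopology A]
    [MeasurableSpace A] [BorelSpace A] {Y : Set (ℕ → A)} {φ : List A → ℝ} {c : ℝ}
    (hY : IsSubshift Y) (h : ws_Sub Y φ c) {μ : Measure (ℕ → A)} (hμ : ∀ᵐ x ∂μ, x ∈ Y) {N m : ℕ}
    (hi : m ≤ N) (hG : ws_G φ μ N) : ws_G φ μ m := by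
  have := ws_G_sub hY h hμ (i := 0) (m := m) (N := N) (by omega) hG
  simpa using this

variable {φ : List (B j) → ℝ} {c : ℝ}

lemma ws_val_bad (h : ws_Chain π X j k w) (hφ : ws_Sub (X j) φ c)
    {μ : ProbabilityMeasure (ℕ → B j)} (hμ : μ ∈ MInv (X j))
    (hG : ¬ ∀ n, ws_G φ (μ : Measure (ℕ → B j)) n) :
    wValGen π X j k w (genPot φ) μ = ⊥ := by
  unfold wValGen
  rw [ws_Phi_bad, EReal.bot_add]
  push Not at hG
  obtain ⟨n, hn⟩ := hG
  refine Eventually.frequently ?_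
  filter_upwards [eventually_ge_atTop n] with N hN hcon
  exact hn (ws_Gall h.sub hφ (ws_ae_X h.sub hμ.2) hN hcon)

lemma ws_V_subadd (h : ws_Chain π X j k w) (hφ : ws_Sub (X j) φ c)
    {μ : ProbabilityMeasure (ℕ → B j)} (hμ : μ ∈ MInv (X j))
    (hG : ∀ n, ws_G φ (μ : Measure (ℕ → B j)) n) :
    Subadditive (ws_V π j k w φ c (μ : Measure (ℕ → B j))) := by
  intro m l
  have h1 := ws_S_add h.sub hφ (ws_ae_X h.sub hμ.2) m l (hG _)
  have h2 := ws_E_add h (μ : Measure (ℕ → B j)) m l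
  rw [ws_map_iter hμ.1] at h1 h2
  unfold ws_V
  linarith

lemma ws_val_tendsto (h : ws_Chain π X j k w) (hφ : ws_Sub (X j) φ c)
    {μ : ProbabilityMeasure (ℕ → B j)} (hμ : μ ∈ MInv (X j))
    (hG : ∀ n, ws_G φ (μ : Measure (ℕ → B j)) n) :
    Tendsto (fun n : ℕ => ((ws_V π j k w φ c (μ : Measure (ℕ → B j)) n / n : ℝ) : EReal)) atTop
      (𝓝 (wValGen π X j k w (genPot φ) μ)) := by
  have hs : Subadditive (fun n => ws_S φ (μ : Measure (ℕ → B j)) n + Real.log c⁻¹) := by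
    intro m l
    have h1 := ws_S_add h.sub hφ (ws_ae_X h.sub hμ.2) m l (hG _)
    rw [ws_map_iter hμ.1] at h1
    show _ + _ ≤ _ + _ + (_ + _)
    linarith
  have t1 := ws_fekete hs
  set l := ⨅ n : {n : ℕ // n ≠ 0},
    (((ws_S φ (μ : Measure (ℕ → B j)) n + Real.log c⁻¹) / (n : ℕ) : ℝ) : EReal)
  have addt : ∀ (u : ℕ → ℝ) (v : ℕ → ℝ) (y : EReal) (z : ℝ),
      Tendsto (fun n => (u n : EReal)) atTop (𝓝 y) → Tendsto v atTop (𝓝 z) →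
      Tendsto (fun n => ((u n + v n : ℝ) : EReal)) atTop (𝓝 (y + z)) := by
    intro u v y z hu hv
    have hv' : Tendsto (fun n => (v n : EReal)) atTop (𝓝 (z : EReal)) := EReal.tendsto_coe.2 hv
    have hc := EReal.continuousAt_add (p := (y, (z : EReal))) (by simp) (by simp)
    have := hc.tendsto.comp (hu.prodMk_nhds hv')
    simpa [Function.comp_def] using this
  have t2 : Tendsto (fun n : ℕ => ((ws_S φ (μ : Measure (ℕ → B j)) n / n : ℝ) : EReal)) atTop
      (𝓝 l) := by
    have h3 : Tendsto (fun n : ℕ => - Real.log c⁻¹ / (n : ℝ)) atTop (𝓝 0) :=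
      tendsto_const_div_atTop_nhds_zero_nat _
    have := addt _ _ _ _ t1 h3
    rw [EReal.coe_zero, add_zero] at this
    refine this.congr fun n => ?_
    congr 1
    ring
  have t3 : PhiStar (μ : Measure (ℕ → B j)) (genPot φ) = l := by
    rw [ws_Phi_good _ _ (Eventually.of_forall hG)]
    exact t2.liminf_eq
  unfold wValGen
  rw [t3]
  refine (addt _ _ _ _ t1 (ws_E_tendsto h hμ)).congr fun n => ?_
  congr 1
  unfold ws_V
  ring

lemma ws_val_eq (h : ws_Chain π X j k w) (hφ : ws_Sub (X j) φ c)
    {μ : ProbabilityMeasure (ℕ → B j)} (hμ : μ ∈ MInv (X j))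
    (hG : ∀ n, ws_G φ (μ : Measure (ℕ → B j)) n) :
    wValGen π X j k w (genPot φ) μ = ⨅ n : {n : ℕ // n ≠ 0},
      ((ws_V π j k w φ c (μ : Measure (ℕ → B j)) n / (n : ℕ) : ℝ) : EReal) :=
  tendsto_nhds_unique (ws_val_tendsto h hφ hμ hG) (ws_fekete (ws_V_subadd h hφ hμ hG))

lemma ws_val_ge_iff (h : ws_Chain π X j k w) (hφ : ws_Sub (X j) φ c)
    {μ : ProbabilityMeasure (ℕ → B j)} (hμ : μ ∈ MInv (X j)) (s : ℝ) :
    (s : EReal) ≤ wValGen π X j k w (genPot φ) μ ↔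
      (∀ n, ws_G φ (μ : Measure (ℕ → B j)) n) ∧
      ∀ n : ℕ, n ≠ 0 → n * s ≤ ws_V π j k w φ c (μ : Measure (ℕ → B j)) n := by
  by_cases hG : ∀ n, ws_G φ (μ : Measure (ℕ → B j)) n
  · rw [ws_val_eq h hφ hμ hG, le_iInf_iff]
    simp only [EReal.coe_le_coe_iff, Subtype.forall, hG, implies_true, true_and]
    refine forall₂_congr fun n hn => ?_
    have : (0 : ℝ) < n := by positivity
    rw [le_div_iff₀ this, mul_comm]
  · rw [ws_val_bad h hφ hμ hG]
    simp [hG]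

lemma ws_val_lt_top (h : ws_Chain π X j k w) (hφ : ws_Sub (X j) φ c)
    {μ : ProbabilityMeasure (ℕ → B j)} (hμ : μ ∈ MInv (X j)) :
    wValGen π X j k w (genPot φ) μ < ⊤ := by
  by_cases hG : ∀ n, ws_G φ (μ : Measure (ℕ → B j)) n
  · rw [ws_val_eq h hφ hμ hG]
    exact (iInf_le _ ⟨1, one_ne_zero⟩).trans_lt (EReal.coe_lt_top _)
  · rw [ws_val_bad h hφ hμ hG]; simp

end

/-! ### Averages and limits -/

section
variable {A : Type} [Fintype A] [TopologicalSpace A] [DiscreteTopology A] [MeasurableSpace A]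
  [BorelSpace A]

/-- Birkhoff average of a measure -/
noncomputable def ws_avg (η : ProbabilityMeasure (ℕ → A)) (n : ℕ) : ProbabilityMeasure (ℕ → A) :=
  ⟨((n + 1 : ℕ) : ℝ≥0∞)⁻¹ • ∑ i ∈ Finset.range (n + 1), (η : Measure (ℕ → A)).map shiftMap^[i], by
    constructor
    simp only [Measure.coe_smul, Pi.smul_apply, smul_eq_mul, Measure.coe_finsetSum,
      Finset.sum_apply]
    have : ∀ i ∈ Finset.range (n + 1),
        ((η : Measure (ℕ → A)).map shiftMap^[i]) Set.univ = 1 := fun i _ => by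
      have := ws_prob_iter (η : Measure (ℕ → A)) i
      exact measure_univ
    rw [Finset.sum_congr rfl this]
    simp only [Finset.sum_const, Finset.card_range, nsmul_eq_mul, mul_one]
    exact ENNReal.inv_mul_cancel (by simp) (by simp)⟩

lemma ws_avg_coe (η : ProbabilityMeasure (ℕ → A)) (n : ℕ) :
    (ws_avg η n : Measure (ℕ → A)) = ((n + 1 : ℕ) : ℝ≥0∞)⁻¹ •
      ∑ i ∈ Finset.range (n + 1), (η : Measure (ℕ → A)).map shiftMap^[i] := rfl

lemma ws_avg_real (η : ProbabilityMeasure (ℕ → A)) (n : ℕ) (s : Set (ℕ → A)) :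
    (ws_avg η n : Measure (ℕ → A)).real s = ((n : ℝ) + 1)⁻¹ *
      ∑ i ∈ Finset.range (n + 1), ((η : Measure (ℕ → A)).map shiftMap^[i]).real s := by
  have hh := fun i => ws_prob_iter (η : Measure (ℕ → A)) i
  rw [ws_avg_coe]
  simp only [Measure.real, Measure.coe_smul, Pi.smul_apply, smul_eq_mul, Measure.coe_finsetSum,
      Finset.sum_apply]
  rw [ENNReal.toReal_mul, ENNReal.toReal_sum (fun i _ => by finiteness)]
  congr 1
  rw [ENNReal.toReal_inv, ENNReal.toReal_natCast]
  push_cast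
  rfl

lemma ws_avg_supp {Y : Set (ℕ → A)} (hY : IsSubshift Y) {η : ProbabilityMeasure (ℕ → A)}
    (hη : (η : Measure (ℕ → A)) Y = 1) (n : ℕ) : (ws_avg η n : Measure (ℕ → A)) Y = 1 := by
  have : ∀ i ∈ Finset.range (n + 1), ((η : Measure (ℕ → A)).map shiftMap^[i]) Y = 1 := by
    intro i _
    rw [Measure.map_apply (ws_meas_iter i) (ws_measX hY)]
    refine le_antisymm prob_le_one ?_
    rw [← hη]
    exact measure_mono fun x hx => ws_shift_mem hY i hx
  rw [ws_avg_coe]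
  simp only [Measure.coe_smul, Pi.smul_apply, smul_eq_mul, Measure.coe_finsetSum,
      Finset.sum_apply]
  rw [Finset.sum_congr rfl this]
  simp only [Finset.sum_const, Finset.card_range, nsmul_eq_mul, mul_one]
  exact ENNReal.inv_mul_cancel (by simp) (by simp)

lemma ws_avg_Hn (η : ProbabilityMeasure (ℕ → A)) (n m : ℕ) :
    ∑ i ∈ Finset.range (n + 1), ws_Hn ((η : Measure (ℕ → A)).map shiftMap^[i]) m ≤
      ((n : ℝ) + 1) * ws_Hn (ws_avg η n : Measure (ℕ → A)) m := by
  unfold ws_Hn ws_Hd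
  rw [Finset.sum_comm, Finset.mul_sum]
  refine Finset.sum_le_sum fun w _ => ?_
  rw [ws_avg_real]
  have hn : (0 : ℝ) < (n : ℝ) + 1 := by positivity
  have := Real.concaveOn_negMulLog.le_map_sum (t := Finset.range (n + 1))
    (w := fun _ => ((n : ℝ) + 1)⁻¹)
    (p := fun i => ((η : Measure (ℕ → A)).map shiftMap^[i]).real (ws_pre m ⁻¹' {w}))
    (fun _ _ => by positivity) (by simp; field_simp) (fun _ _ => measureReal_nonneg)
  simp only [smul_eq_mul, ← Finset.mul_sum] at this
  rw [inv_mul_le_iff₀ hn] at this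
  exact this

lemma ws_avg_S (φ : List A → ℝ) (η : ProbabilityMeasure (ℕ → A)) (n m : ℕ) :
    ∑ i ∈ Finset.range (n + 1), ws_S φ ((η : Measure (ℕ → A)).map shiftMap^[i]) m =
      ((n : ℝ) + 1) * ws_S φ (ws_avg η n : Measure (ℕ → A)) m := by
  have hh := fun i => ws_prob_iter (η : Measure (ℕ → A)) i
  have hn : (0 : ℝ) < (n : ℝ) + 1 := by positivity
  simp_rw [ws_S_sum]
  rw [Finset.sum_comm, Finset.mul_sum]
  refine Finset.sum_congr rfl fun w _ => ?_
  rw [ws_avg_real, Finset.mul_sum, Finset.sum_mul, Finset.mul_sum]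
  refine Finset.sum_congr rfl fun i _ => ?_
  field_simp

lemma ws_isClosed_supp {Y : Set (ℕ → A)} (hY : IsSubshift Y) :
    IsClosed {μ : ProbabilityMeasure (ℕ → A) | (μ : Measure (ℕ → A)) Y = 1} := by
  rw [isClosed_iff_ultrafilter]
  intro μ u hu hmem
  have hlim : Tendsto (fun i : ProbabilityMeasure (ℕ → A) => i) (u : Filter _) (𝓝 μ) := hu
  have h1 := ProbabilityMeasure.limsup_measure_closed_le_of_tendsto hlim hY.2.1.isClosed
  have h2 : limsup (fun i : ProbabilityMeasure (ℕ → A) => (i : Measure (ℕ → A)) Y)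
      (u : Filter _) = 1 := by
    rw [limsup_congr (v := fun _ => 1)]
    · simp
    · exact hmem
  rw [h2] at h1
  exact le_antisymm prob_le_one h1

lemma ws_isClosed_MInv {Y : Set (ℕ → A)} (hY : IsSubshift Y) : IsClosed (MInv Y) := by
  have h1 : IsClosed {μ : ProbabilityMeasure (ℕ → A) |
      (μ : Measure (ℕ → A)).map shiftMap = (μ : Measure (ℕ → A))} := by
    have := isClosed_eq (ProbabilityMeasure.continuous_map (ws_cont_shift (A := A))) continuous_id
    convert this using 1
    ext μ
    simp only [Set.mem_ofPred_eq, id]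
    exact ⟨fun h => Subtype.ext h, fun h => congrArg Subtype.val h⟩
  exact h1.inter (ws_isClosed_supp hY)

lemma ws_isCompact_MInv {Y : Set (ℕ → A)} (hY : IsSubshift Y) : IsCompact (MInv Y) :=
  (ws_isClosed_MInv hY).isCompact

lemma ws_limit {Y : Set (ℕ → A)} (hY : IsSubshift Y) (η : ℕ → ProbabilityMeasure (ℕ → A))
    (hη : ∀ n, (η n : Measure (ℕ → A)) Y = 1) :
    ∃ μ ∈ MInv Y, ∃ U : Ultrafilter ℕ, (U : Filter ℕ) ≤ atTop ∧
      Tendsto (fun n => ws_avg (η n) n) U (𝓝 μ) := by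
  set U : Ultrafilter ℕ := Filter.hyperfilter ℕ with hU
  have hUle : (U : Filter ℕ) ≤ atTop := by
    rw [← Nat.cofinite_eq_atTop]; exact Filter.hyperfilter_le_cofinite
  obtain ⟨μ, -, hμ⟩ := isCompact_univ.ultrafilter_le_nhds
    (U.map fun n => ws_avg (η n) n) (by simp)
  have hlim : Tendsto (fun n => ws_avg (η n) n) U (𝓝 μ) := hμ
  refine ⟨μ, ⟨?_, ?_⟩, U, hUle, hlim⟩
  · have hp : IsProbabilityMeasure ((μ : Measure (ℕ → A)).map shiftMap) := by
      have := ws_prob_iter (μ : Measure (ℕ → A)) 1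
      simpa using this
    refine ws_ext fun m w => ?_
    set s : Set (ℕ → A) := ws_pre m ⁻¹' {w}
    have hs : MeasurableSet s := ws_meas_pre m .of_discrete
    have t1 : Tendsto (fun n => (ws_avg (η n) n : Measure (ℕ → A)).real s) U
      (𝓝 ((μ : Measure (ℕ → A)).real s)) := ((ws_cont_real w).tendsto μ).comp hlim
    have t2 : Tendsto (fun n => ((ws_avg (η n) n : Measure (ℕ → A)).map shiftMap).real s) U
      (𝓝 (((μ : Measure (ℕ → A)).map shiftMap).real s)) :=
      (((ws_cont_real w).comp (ProbabilityMeasure.continuous_map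
        (ws_cont_shift (A := A)))).tendsto μ).comp hlim
    have key : ∀ n, ((ws_avg (η n) n : Measure (ℕ → A)).map shiftMap).real s -
        (ws_avg (η n) n : Measure (ℕ → A)).real s = ((n : ℝ) + 1)⁻¹ *
        (((η n : Measure (ℕ → A)).map shiftMap^[n + 1]).real s -
          ((η n : Measure (ℕ → A)).map shiftMap^[0]).real s) := by
      intro n
      rw [map_measureReal_apply ws_meas_shift hs, ws_avg_real, ws_avg_real, ← mul_sub,
        ← Finset.sum_sub_distrib]
      congr 1
      rw [← Finset.sum_range_sub (fun i => ((η n : Measure (ℕ → A)).map shiftMap^[i]).real s) (n + 1)]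
      refine Finset.sum_congr rfl fun i _ => ?_
      congr 1
      rw [map_measureReal_apply (ws_meas_iter i) (ws_meas_shift hs),
        map_measureReal_apply (ws_meas_iter (i + 1)) hs, ← Set.preimage_comp,
        Function.iterate_succ' shiftMap i]
    have t3 : Tendsto (fun n : ℕ => ((ws_avg (η n) n : Measure (ℕ → A)).map shiftMap).real s -
        (ws_avg (η n) n : Measure (ℕ → A)).real s) U (𝓝 0) := by
      refine Tendsto.mono_left ?_ hUle
      refine squeeze_zero_norm (a := fun n : ℕ => 1 / ((n : ℝ) + 1)) (fun n => ?_)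
        tendsto_one_div_add_atTop_nhds_zero_nat
      rw [key]
      have p1 := ws_prob_iter (η n : Measure (ℕ → A)) (n + 1)
      have p2 := ws_prob_iter (η n : Measure (ℕ → A)) 0
      have b1 : ((η n : Measure (ℕ → A)).map shiftMap^[n + 1]).real s ≤ 1 := measureReal_le_one
      have b2 : ((η n : Measure (ℕ → A)).map shiftMap^[0]).real s ≤ 1 := measureReal_le_one
      have b3 : 0 ≤ ((η n : Measure (ℕ → A)).map shiftMap^[n + 1]).real s := measureReal_nonneg
      have b4 : 0 ≤ ((η n : Measure (ℕ → A)).map shiftMap^[0]).real s := measureReal_nonneg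
      rw [norm_mul, Real.norm_of_nonneg (by positivity), one_div]
      refine mul_le_of_le_one_right (by positivity) ?_
      rw [Real.norm_eq_abs, abs_le]
      constructor <;> linarith
    have := tendsto_nhds_unique (t2.sub t1) t3
    linarith
  · exact (ws_isClosed_supp hY).mem_of_tendsto hlim
      (Eventually.of_forall fun n => ws_avg_supp hY (hη n) n)

lemma ws_MInv_nonempty {Y : Set (ℕ → A)} (hY : IsSubshift Y) : (MInv Y).Nonempty := by
  obtain ⟨x, hx⟩ := hY.1
  obtain ⟨μ, hμ, -⟩ := ws_limit hY (fun _ => ⟨Measure.dirac x, inferInstance⟩)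
    (fun n => by simp [hx])
  exact ⟨μ, hμ⟩

lemma ws_isClosed_G (φ : List A → ℝ) :
    IsClosed {μ : ProbabilityMeasure (ℕ → A) | ∀ n, ws_G φ (μ : Measure (ℕ → A)) n} := by
  simp only [ws_G_iff, Set.ofPred_forall]
  exact isClosed_iInter fun n => isClosed_iInter fun w => isClosed_iInter fun _ =>
    isClosed_eq (ws_cont_real w) continuous_const

end

section
variable {B : ℕ → Type} [∀ i, Fintype (B i)] [∀ i, TopologicalSpace (B i)]
  [∀ i, DiscreteTopology (B i)] [∀ i, MeasurableSpace (B i)] [∀ i, BorelSpace (B i)]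
  {π : ∀ i, B i → B (i+1)} {X : ∀ i, Set (ℕ → B i)} {j k : ℕ} {w : ℕ → ℝ}
  {φ : List (B j) → ℝ} {c : ℝ}

lemma ws_isClosed_ge (h : ws_Chain π X j k w) (hφ : ws_Sub (X j) φ c) (s : ℝ) :
    IsClosed {μ | μ ∈ MInv (X j) ∧ (s : EReal) ≤ wValGen π X j k w (genPot φ) μ} := by
  have : {μ | μ ∈ MInv (X j) ∧ (s : EReal) ≤ wValGen π X j k w (genPot φ) μ} =
      MInv (X j) ∩ ({μ | ∀ n, ws_G φ (μ : Measure (ℕ → B j)) n} ∩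
        {μ | ∀ n : ℕ, n ≠ 0 → n * s ≤ ws_V π j k w φ c (μ : Measure (ℕ → B j)) n}) := by
    ext μ
    simp only [Set.mem_ofPred_eq, Set.mem_inter_iff]
    exact and_congr_right fun hμ => ws_val_ge_iff h hφ hμ s
  rw [this]
  refine (ws_isClosed_MInv h.sub).inter ((ws_isClosed_G φ).inter ?_)
  simp only [Set.ofPred_forall]
  exact isClosed_iInter fun n => isClosed_iInter fun _ =>
    isClosed_le continuous_const (ws_cont_V φ c n)

lemma ws_usc (h : ws_Chain π X j k w) (hφ : ws_Sub (X j) φ c) :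
    UpperSemicontinuousOn (wValGen π X j k w (genPot φ)) (MInv (X j)) := by
  intro μ hμ y hy
  obtain ⟨r, hr1, hr2⟩ := EReal.lt_iff_exists_real_btwn.1 hy
  have := (ws_isClosed_ge h hφ r).isOpen_compl.mem_nhds (x := μ)
    (fun hh => absurd hh.2 (not_le.2 hr1))
  filter_upwards [mem_nhdsWithin_of_mem_nhds this, self_mem_nhdsWithin] with η h1 h2
  by_contra hcon
  exact h1 ⟨h2, hr2.le.trans (not_lt.1 hcon)⟩

lemma ws_mem_iff {μ : ProbabilityMeasure (ℕ → B j)} {f : ℕ → (ℕ → B j) → ℝ} :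
    μ ∈ wEqSetGen π X j k w f ↔ μ ∈ MInv (X j) ∧
      ∀ η ∈ MInv (X j), wValGen π X j k w f η ≤ wValGen π X j k w f μ := by
  unfold wEqSetGen
  simp only [Set.mem_ofPred_eq]
  refine and_congr_right fun hμ => ?_
  constructor
  · intro h η hη
    rw [h]
    exact le_iSup₂ (f := fun η (_ : η ∈ MInv (X j)) => wValGen π X j k w f η) η hη
  · intro h
    exact le_antisymm
      (le_iSup₂ (f := fun η (_ : η ∈ MInv (X j)) => wValGen π X j k w f η) μ hμ) (iSup₂_le h)

lemma ws_I_nonempty (h : ws_Chain π X j k w) (hφ : ws_Sub (X j) φ c) :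
    (wEqSetGen π X j k w (genPot φ)).Nonempty := by
  obtain ⟨μ, hμ, hmax⟩ := (ws_usc h hφ).exists_isMaxOn (ws_MInv_nonempty h.sub)
    (ws_isCompact_MInv h.sub)
  exact ⟨μ, ws_mem_iff.2 ⟨hμ, fun η hη => hmax hη⟩⟩

lemma ws_I_eq (h : ws_Chain π X j k w) (hφ : ws_Sub (X j) φ c) :
    wEqSetGen π X j k w (genPot φ) = MInv (X j) ∨ ∃ s : ℝ,
      (∀ η ∈ MInv (X j), wValGen π X j k w (genPot φ) η ≤ s) ∧
      wEqSetGen π X j k w (genPot φ) =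
        {μ | μ ∈ MInv (X j) ∧ (s : EReal) ≤ wValGen π X j k w (genPot φ) μ} := by
  obtain ⟨μ, hμ⟩ := ws_I_nonempty h hφ
  have hμ' := ws_mem_iff.1 hμ
  have ht := ws_val_lt_top h hφ hμ'.1
  rcases eq_or_ne (wValGen π X j k w (genPot φ) μ) ⊥ with hb | hb
  · left
    ext η
    rw [ws_mem_iff]
    refine ⟨fun h => h.1, fun hη => ⟨hη, fun ζ hζ => ?_⟩⟩
    have := hμ'.2 ζ hζ
    rw [hb, le_bot_iff] at this
    rw [this]; exact bot_le
  · right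
    have e := EReal.coe_toReal ht.ne hb
    refine ⟨(wValGen π X j k w (genPot φ) μ).toReal, ?_, ?_⟩
    · rw [e]; exact hμ'.2
    · ext η
      rw [ws_mem_iff, e]
      exact and_congr_right fun hη => ⟨fun h => h μ hμ'.1, fun h ζ hζ => (hμ'.2 ζ hζ).trans h⟩

lemma ws_I_compact (h : ws_Chain π X j k w) (hφ : ws_Sub (X j) φ c) :
    IsCompact (wEqSetGen π X j k w (genPot φ)) := by
  rcases ws_I_eq h hφ with e | ⟨s, -, e⟩
  · rw [e]; exact ws_isCompact_MInv h.sub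
  · rw [e]; exact (ws_isClosed_ge h hφ s).isCompact

lemma ws_MInv_mix {A : Type} [Fintype A] [TopologicalSpace A] [DiscreteTopology A]
    [MeasurableSpace A] [BorelSpace A] {Y : Set (ℕ → A)} {μ μ₁ μ₂ : ProbabilityMeasure (ℕ → A)}
    (h1 : μ₁ ∈ MInv Y) (h2 : μ₂ ∈ MInv Y) {t : ℝ} (ht0 : 0 ≤ t) (ht1 : t ≤ 1)
    (hm : (μ : Measure (ℕ → A)) = ENNReal.ofReal t • (μ₁ : Measure (ℕ → A)) +
      ENNReal.ofReal (1 - t) • (μ₂ : Measure (ℕ → A))) : μ ∈ MInv Y := by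
  constructor
  · rw [ws_map_mix hm ws_meas_shift, h1.1, h2.1, hm]
  · rw [hm]
    simp only [Measure.coe_add, Measure.coe_smul, Pi.add_apply, Pi.smul_apply, smul_eq_mul,
      h1.2, h2.2, mul_one]
    rw [← ENNReal.ofReal_add ht0 (by linarith)]
    simp

lemma ws_I_convex (h : ws_Chain π X j k w) (hφ : ws_Sub (X j) φ c) :
    ConvexPM (wEqSetGen π X j k w (genPot φ)) := by
  intro μ₁ h1 μ₂ h2 t ht0 ht1 μ hm
  rcases ws_I_eq h hφ with e | ⟨s, -, e⟩
  · rw [e] at h1 h2 ⊢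
    exact ws_MInv_mix h1 h2 ht0 ht1 hm
  · rw [e] at h1 h2 ⊢
    have hμ : μ ∈ MInv (X j) := ws_MInv_mix h1.1 h2.1 ht0 ht1 hm
    refine ⟨hμ, (ws_val_ge_iff h hφ hμ s).2 ?_⟩
    obtain ⟨g1, v1⟩ := (ws_val_ge_iff h hφ h1.1 s).1 h1.2
    obtain ⟨g2, v2⟩ := (ws_val_ge_iff h hφ h2.1 s).1 h2.2
    constructor
    · intro n
      rw [ws_G_iff]
      intro u hu
      rw [ws_mix_real ht0 ht1 hm, (ws_G_iff _ _ _).1 (g1 n) u hu, (ws_G_iff _ _ _).1 (g2 n) u hu]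
      simp
    · intro n hn
      have e1 := ws_E_concave h ht0 ht1 hm n
      have e2 := ws_S_mix φ ht0 ht1 hm n
      have e3 := mul_le_mul_of_nonneg_left (v1 n hn) ht0
      have e4 := mul_le_mul_of_nonneg_left (v2 n hn) (by linarith : 0 ≤ 1 - t)
      unfold ws_V at *
      rw [e2]
      linarith

lemma ws_I_face (h : ws_Chain π X j k w) (hφ : ws_Sub (X j) φ c)
    {μ μ₁ μ₂ : ProbabilityMeasure (ℕ → B j)} (hμ : μ ∈ wEqSetGen π X j k w (genPot φ))
    (h1 : μ₁ ∈ MInv (X j)) (h2 : μ₂ ∈ MInv (X j)) {t : ℝ} (ht0 : 0 < t) (ht1 : t < 1)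
    (hm : (μ : Measure (ℕ → B j)) = ENNReal.ofReal t • (μ₁ : Measure (ℕ → B j)) +
      ENNReal.ofReal (1 - t) • (μ₂ : Measure (ℕ → B j))) :
    μ₁ ∈ wEqSetGen π X j k w (genPot φ) := by
  rcases ws_I_eq h hφ with e | ⟨s, hs, e⟩
  · rw [e]; exact h1
  · rw [e] at hμ ⊢
    obtain ⟨g, v⟩ := (ws_val_ge_iff h hφ hμ.1 s).1 hμ.2
    have hz : ∀ n (u : Fin n → B j), φ (List.ofFn u) ≤ 0 →
        (μ₁ : Measure (ℕ → B j)).real (ws_pre n ⁻¹' {u}) = 0 ∧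
        (μ₂ : Measure (ℕ → B j)).real (ws_pre n ⁻¹' {u}) = 0 := by
      intro n u hu
      have := (ws_G_iff _ _ _).1 (g n) u hu
      rw [ws_mix_real ht0.le ht1.le hm] at this
      have p1 : 0 ≤ (μ₁ : Measure (ℕ → B j)).real (ws_pre n ⁻¹' {u}) := measureReal_nonneg
      have p2 : 0 ≤ (μ₂ : Measure (ℕ → B j)).real (ws_pre n ⁻¹' {u}) := measureReal_nonneg
      constructor <;> nlinarith
    have g1 : ∀ n, ws_G φ (μ₁ : Measure (ℕ → B j)) n :=
      fun n => (ws_G_iff _ _ _).2 fun u hu => (hz n u hu).1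
    have g2 : ∀ n, ws_G φ (μ₂ : Measure (ℕ → B j)) n :=
      fun n => (ws_G_iff _ _ _).2 fun u hu => (hz n u hu).2
    refine ⟨h1, ?_⟩
    set K := Real.log c⁻¹ + (∑ i ∈ Finset.range k, w i) *
      (Real.negMulLog t + Real.negMulLog (1 - t)) with hK
    by_contra hcon
    rw [not_le] at hcon
    obtain ⟨r, hr1, hr2⟩ := EReal.lt_iff_exists_real_btwn.1 hcon
    have hrs : r < s := EReal.coe_lt_coe_iff.1 hr2
    set ε := t * (s - r) with hε
    have hε0 : 0 < ε := mul_pos ht0 (by linarith)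
    have T1 := (ws_val_tendsto h hφ h1 g1).eventually_lt_const hr1
    have T2 := (ws_val_tendsto h hφ h2 g2).eventually_lt_const
      (u := ((s + ε / 2 : ℝ) : EReal)) ((hs μ₂ h2).trans_lt
        (EReal.coe_lt_coe_iff.2 (by linarith)))
    have T3 : Tendsto (fun n : ℕ => K / (n : ℝ)) atTop (𝓝 0) :=
      tendsto_const_div_atTop_nhds_zero_nat _
    have T3' := T3.eventually_lt_const (u := ε / 2) (by linarith)
    obtain ⟨n, a1, a2, a3, hn⟩ := (T1.and (T2.and (T3'.and (eventually_ne_atTop 0)))).exists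
    have hn0 : (0 : ℝ) < n := by positivity
    rw [EReal.coe_lt_coe_iff, div_lt_iff₀ hn0] at a1 a2
    rw [div_lt_iff₀ hn0] at a3
    have e1 := ws_E_convex h ht0.le ht1.le hm n
    have e2 := ws_S_mix φ ht0.le ht1.le hm n
    have e3 := v n hn
    have b1 := mul_lt_mul_of_pos_left a1 ht0
    have b2 := mul_lt_mul_of_pos_left a2 (by linarith : 0 < 1 - t)
    have b3 : ws_V π j k w φ c (μ : Measure (ℕ → B j)) n ≤
        t * ws_V π j k w φ c (μ₁ : Measure (ℕ → B j)) n +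
        (1 - t) * ws_V π j k w φ c (μ₂ : Measure (ℕ → B j)) n + (K - Real.log c⁻¹) := by
      unfold ws_V
      rw [e2, hK]
      linarith
    have hc : 0 ≤ Real.log c⁻¹ := Real.log_nonneg ((one_le_inv₀ hφ.c0).2 hφ.c1)
    have b4 : (1 - t) * ((s + ε / 2) * n) ≤ ((1 - t) * s + ε / 2) * n := by
      have : 0 < t * (ε / 2) * n := by positivity
      nlinarith
    have b5 : (n : ℝ) * s < n * s := by
      calc (n : ℝ) * s ≤ _ := e3
        _ ≤ _ := b3
        _ < t * (r * n) + (((1 - t) * s + ε / 2) * n) + ε / 2 * n := by linarith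
        _ = n * s := by rw [hε]; ring
    exact lt_irrefl _ b5

lemma ws_I_ergodic (h : ws_Chain π X j k w) (hφ : ws_Sub (X j) φ c)
    {μ : ProbabilityMeasure (ℕ → B j)}
    (hμ : IsExtremePM (wEqSetGen π X j k w (genPot φ)) μ) :
    Ergodic shiftMap (μ : Measure (ℕ → B j)) := by
  have hinv := (ws_mem_iff.1 hμ.1).1
  refine ⟨⟨ws_meas_shift, hinv.1⟩, ⟨fun s hs hss => ?_⟩⟩
  by_contra hcon
  have hne0 : (μ : Measure (ℕ → B j)) s ≠ 0 := fun h0 => hcon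
    (Filter.eventuallyConst_set'.2 (Or.inl (by rwa [ae_eq_empty])))
  have hne1 : (μ : Measure (ℕ → B j)) sᶜ ≠ 0 := fun h0 => hcon
    (Filter.eventuallyConst_set'.2 (Or.inr (by rwa [ae_eq_univ])))
  have gen : ∀ u : Set (ℕ → B j), MeasurableSet u → shiftMap ⁻¹' u = u →
      (μ : Measure (ℕ → B j)) u ≠ 0 → ∃ ν : ProbabilityMeasure (ℕ → B j), ν ∈ MInv (X j) ∧
      (ν : Measure (ℕ → B j)) = ((μ : Measure (ℕ → B j)) u)⁻¹ •
        (μ : Measure (ℕ → B j)).restrict u := by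
    intro u hu huu hu0
    have hp := ProbabilityTheory.cond_isProbabilityMeasure (μ := (μ : Measure (ℕ → B j))) hu0
    refine ⟨⟨_, hp⟩, ⟨?_, ?_⟩, rfl⟩
    · show (((μ : Measure (ℕ → B j)) u)⁻¹ • (μ : Measure (ℕ → B j)).restrict u).map shiftMap =
        ((μ : Measure (ℕ → B j)) u)⁻¹ • (μ : Measure (ℕ → B j)).restrict u
      rw [Measure.map_smul]
      congr 1
      have := Measure.restrict_map (μ := (μ : Measure (ℕ → B j))) ws_meas_shift hu
      rw [huu, hinv.1] at this
      exact this.symm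
    · have hac : (ProbabilityTheory.cond (μ : Measure (ℕ → B j)) u) ≪ (μ : Measure (ℕ → B j)) :=
        ProbabilityTheory.cond_absolutelyContinuous
      have h0 : (ProbabilityTheory.cond (μ : Measure (ℕ → B j)) u) (X j)ᶜ = 0 :=
        hac ((prob_compl_eq_zero_iff (ws_measX h.sub)).2 hinv.2)
      have hr := (prob_compl_eq_zero_iff (μ := ProbabilityTheory.cond (μ : Measure (ℕ → B j)) u)
        (ws_measX h.sub)).1 h0
      exact hr
  have hsc : shiftMap ⁻¹' sᶜ = sᶜ := by rw [Set.preimage_compl, hss]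
  obtain ⟨μ₁, hμ₁, e1⟩ := gen s hs hss hne0
  obtain ⟨μ₂, hμ₂, e2⟩ := gen sᶜ hs.compl hsc hne1
  set t := (μ : Measure (ℕ → B j)).real s with ht
  have ht0 : 0 < t := ENNReal.toReal_pos hne0 (measure_ne_top _ _)
  have htc : (μ : Measure (ℕ → B j)).real sᶜ = 1 - t := by
    rw [measureReal_compl hs]; simp [ht]
  have ht1 : t < 1 := by
    have : 0 < (μ : Measure (ℕ → B j)).real sᶜ := ENNReal.toReal_pos hne1 (measure_ne_top _ _)
    linarith
  have et : ENNReal.ofReal t = (μ : Measure (ℕ → B j)) s := ofReal_measureReal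
  have etc : ENNReal.ofReal (1 - t) = (μ : Measure (ℕ → B j)) sᶜ := by
    rw [← htc]; exact ofReal_measureReal
  have hm : (μ : Measure (ℕ → B j)) = ENNReal.ofReal t • (μ₁ : Measure (ℕ → B j)) +
      ENNReal.ofReal (1 - t) • (μ₂ : Measure (ℕ → B j)) := by
    rw [et, etc, e1, e2, smul_smul, smul_smul, ENNReal.mul_inv_cancel hne0 (measure_ne_top _ _),
      ENNReal.mul_inv_cancel hne1 (measure_ne_top _ _), one_smul, one_smul,
      Measure.restrict_add_restrict_compl hs]
  have hm' : (μ : Measure (ℕ → B j)) = ENNReal.ofReal (1 - t) • (μ₂ : Measure (ℕ → B j)) +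
      ENNReal.ofReal (1 - (1 - t)) • (μ₁ : Measure (ℕ → B j)) := by
    rw [sub_sub_cancel, add_comm]; exact hm
  have m1 := ws_I_face h hφ hμ.1 hμ₁ hμ₂ ht0 ht1 hm
  have m2 := ws_I_face h hφ hμ.1 hμ₂ hμ₁ (by linarith) (by linarith) hm'
  have heq := hμ.2 μ₁ m1 μ₂ m2 t ht0 ht1 hm
  rw [← heq, e1] at e2
  have := congrArg (fun ν : Measure (ℕ → B j) => ν s) e2
  simp only [Measure.coe_smul, Pi.smul_apply, smul_eq_mul, Measure.restrict_apply hs,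
    Set.inter_self, Set.inter_compl_self, measure_empty, mul_zero] at this
  rw [ENNReal.inv_mul_cancel hne0 (measure_ne_top _ _)] at this
  exact one_ne_zero this

lemma ws_KM {A : Type} [Fintype A] [TopologicalSpace A] [DiscreteTopology A]
    [MeasurableSpace A] [BorelSpace A] {S : Set (ProbabilityMeasure (ℕ → A))}
    (hc : IsCompact S) (hconv : ConvexPM S) (ρ : ProbabilityMeasure (ℕ → A))
    (hext : ∀ μ, IsExtremePM S μ → μ = ρ) : ∀ μ ∈ S, μ = ρ := by
  set e : ProbabilityMeasure (ℕ → A) → ((Σ n, Fin n → A) → ℝ) :=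
    fun μ u => (μ : Measure (ℕ → A)).real (ws_pre u.1 ⁻¹' {u.2}) with he
  have hcont : Continuous e := continuous_pi fun u => ws_cont_real u.2
  have hinj : Function.Injective e := fun μ ν h => by
    have hr : (μ : Measure (ℕ → A)) = (ν : Measure (ℕ → A)) :=
      ws_ext fun n w => congrFun h ⟨n, w⟩
    exact Subtype.ext hr
  have mix : ∀ μ₁ μ₂ : ProbabilityMeasure (ℕ → A), ∀ t : ℝ, 0 ≤ t → t ≤ 1 →
      ∃ μ : ProbabilityMeasure (ℕ → A), (μ : Measure (ℕ → A)) =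
        ENNReal.ofReal t • (μ₁ : Measure (ℕ → A)) +
        ENNReal.ofReal (1 - t) • (μ₂ : Measure (ℕ → A)) ∧
        e μ = t • e μ₁ + (1 - t) • e μ₂ := by
    intro μ₁ μ₂ t h0 h1
    have hp : IsProbabilityMeasure (ENNReal.ofReal t • (μ₁ : Measure (ℕ → A)) +
        ENNReal.ofReal (1 - t) • (μ₂ : Measure (ℕ → A))) := by
      constructor
      simp only [Measure.coe_add, Measure.coe_smul, Pi.add_apply, Pi.smul_apply, smul_eq_mul,
        measure_univ, mul_one]
      rw [← ENNReal.ofReal_add h0 (by linarith)]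
      simp
    obtain ⟨μ, hμ⟩ : ∃ μ : ProbabilityMeasure (ℕ → A), (μ : Measure (ℕ → A)) =
      ENNReal.ofReal t • (μ₁ : Measure (ℕ → A)) +
        ENNReal.ofReal (1 - t) • (μ₂ : Measure (ℕ → A)) := ⟨⟨_, hp⟩, rfl⟩
    refine ⟨μ, hμ, ?_⟩
    funext u
    have hr := ws_mix_real h0 h1 hμ (ws_pre u.1 ⁻¹' {u.2})
    exact hr
  have hKc : IsCompact (e '' S) := hc.image hcont
  have hKconv : Convex ℝ (e '' S) := by
    rintro _ ⟨μ₁, h1, rfl⟩ _ ⟨μ₂, h2, rfl⟩ a b ha hb hab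
    obtain ⟨μ, hm, hμ⟩ := mix μ₁ μ₂ a ha (by linarith)
    refine ⟨μ, hconv μ₁ h1 μ₂ h2 a ha (by linarith) μ hm, ?_⟩
    rw [hμ, ← hab, add_sub_cancel_left]
  have hE : (e '' S).extremePoints ℝ ⊆ {e ρ} := by
    rintro _ ⟨⟨μ, hμ, rfl⟩, hx⟩
    have : IsExtremePM S μ := by
      refine ⟨hμ, fun μ₁ h1 μ₂ h2 t ht0 ht1 hm => ?_⟩
      obtain ⟨μ', hm', hμ'⟩ := mix μ₁ μ₂ t ht0.le ht1.le
      have hmm : μ' = μ := Subtype.ext (hm'.trans hm.symm)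
      rw [hmm] at hμ'
      have hh1 := hx ⟨μ₁, h1, rfl⟩ ⟨μ₂, h2, rfl⟩ ⟨t, 1 - t, ht0, by linarith, by ring, hμ'.symm⟩
      have hh2 := hx ⟨μ₂, h2, rfl⟩ ⟨μ₁, h1, rfl⟩
        ⟨1 - t, t, by linarith, ht0, by ring, by rw [hμ', add_comm]⟩
      exact hinj (hh1.trans hh2.symm)
    rw [hext μ this]; rfl
  have hKM := closure_convexHull_extremePoints hKc hKconv
  intro μ hμ
  have h1 : e μ ∈ closure (convexHull ℝ ((e '' S).extremePoints ℝ)) := by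
    rw [hKM]; exact ⟨μ, hμ, rfl⟩
  have h2 : closure (convexHull ℝ ((e '' S).extremePoints ℝ)) ⊆ {e ρ} := by
    have : convexHull ℝ ((e '' S).extremePoints ℝ) ⊆ {e ρ} := by
      have := convexHull_mono (𝕜 := ℝ) hE
      simpa using this
    exact closure_minimal this isClosed_singleton
  exact hinj (h2 h1)

end

/-! ### The Misiurewicz argument -/

lemma ws_window_aux (g : ℕ → ℕ → ℝ) (N m : ℕ) (K : ℝ) (hm : 1 ≤ m)
    (hs : ∀ i a b, i + a + b ≤ N → g i (a + b) ≤ g i a + g (i + a) b)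
    (hK : ∀ i l, l ≤ m → i + l ≤ N → g i l ≤ K) (L : ℕ) :
    ∀ r, r + L ≤ N → g r L ≤ K + ∑ j ∈ Finset.range (L / m), g (r + j * m) m := by
  induction L using Nat.strong_induction_on with
  | _ L ih =>
    intro r hr
    rcases lt_or_ge L m with h | h
    · rw [Nat.div_eq_of_lt h]
      simpa using hK r L h.le hr
    · obtain ⟨d, rfl⟩ := Nat.exists_eq_add_of_le h
      have e : (m + d) / m = d / m + 1 := by
        rw [Nat.add_comm, Nat.add_div_right d (by omega)]
      rw [e, Finset.sum_range_succ']
      have h1 := hs r m d (by omega)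
      have h2 := ih d (by omega) (r + m) (by omega)
      have h3 : ∀ j, r + m + j * m = r + (j + 1) * m := fun j => by ring
      simp only [h3] at h2
      simp only [zero_mul, add_zero]
      linarith

lemma ws_window (g : ℕ → ℕ → ℝ) (N m : ℕ) (K : ℝ) (hm : 1 ≤ m) (hmN : m ≤ N)
    (hs : ∀ i a b, i + a + b ≤ N → g i (a + b) ≤ g i a + g (i + a) b)
    (hK : ∀ i l, l ≤ m → i + l ≤ N → g i l ≤ K) :
    m * g 0 N ≤ ∑ i ∈ Finset.range (N + 1 - m), g i m + m * (2 * K) := by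
  have h1 : ∀ r ∈ Finset.range m, g 0 N ≤
      2 * K + ∑ j ∈ Finset.range ((N - r) / m), g (r + j * m) m := by
    intro r hr
    have hr' := Finset.mem_range.1 hr
    have a1 := hs 0 r (N - r) (by omega)
    rw [Nat.zero_add, Nat.add_sub_cancel' (by omega)] at a1
    have a2 := hK 0 r hr'.le (by omega)
    have a3 := ws_window_aux g N m K hm hs hK (N - r) r (by omega)
    linarith
  have h2 := Finset.sum_le_sum h1
  rw [Finset.sum_const, Finset.card_range, nsmul_eq_mul, Finset.sum_add_distrib, Finset.sum_const,
    Finset.card_range, nsmul_eq_mul, Finset.sum_sigma'] at h2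
  have h3 : ∑ x ∈ (Finset.range m).sigma (fun r => Finset.range ((N - r) / m)),
      g (x.1 + x.2 * m) m = ∑ i ∈ Finset.range (N + 1 - m), g i m := by
    refine Finset.sum_nbij' (fun x => x.1 + x.2 * m) (fun i => ⟨i % m, i / m⟩) ?_ ?_ ?_ ?_ ?_
    · rintro ⟨r, j⟩ hx
      simp only [Finset.mem_sigma, Finset.mem_range] at hx ⊢
      have h4 := hx.2
      rw [Nat.lt_iff_add_one_le, Nat.le_div_iff_mul_le (by omega), Nat.add_mul] at h4
      omega
    · intro i hi
      simp only [Finset.mem_sigma, Finset.mem_range] at hi ⊢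
      refine ⟨Nat.mod_lt _ (by omega), ?_⟩
      rw [Nat.lt_iff_add_one_le, Nat.le_div_iff_mul_le (by omega), Nat.add_mul]
      have := Nat.mod_add_div i m
      rw [mul_comm] at this
      omega
    · rintro ⟨r, j⟩ hx
      simp only [Finset.mem_sigma, Finset.mem_range] at hx ⊢
      have e1 : (r + j * m) % m = r := by
        rw [Nat.add_mul_mod_self_right, Nat.mod_eq_of_lt hx.1]
      have e2 : (r + j * m) / m = j := by
        rw [Nat.add_mul_div_right _ _ (by omega), Nat.div_eq_of_lt hx.1, zero_add]
      rw [e1, e2]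
    · intro i _
      simp only
      rw [mul_comm]; exact Nat.mod_add_div i m
    · intro x _
      rfl
  rw [h3] at h2
  linarith

section
variable {A : Type} [Fintype A] [TopologicalSpace A] [DiscreteTopology A] [MeasurableSpace A]
  [BorelSpace A]

lemma ws_S_abs (φ : List A → ℝ) (μ : Measure (ℕ → A)) [IsProbabilityMeasure μ] (n : ℕ) :
    |ws_S φ μ n| ≤ ∑ w : Fin n → A, |Real.log (φ (List.ofFn w))| := by
  rw [ws_S_sum]
  refine (Finset.abs_sum_le_sum_abs _ _).trans (Finset.sum_le_sum fun w _ => ?_)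
  rw [abs_mul, abs_of_nonneg measureReal_nonneg]
  exact mul_le_of_le_one_left (abs_nonneg _) measureReal_le_one

/-- The uniform window estimate. -/
lemma ws_mis {Y : Set (ℕ → A)} {φ : List A → ℝ} {c a : ℝ} (hY : IsSubshift Y)
    (hφ : ws_Sub Y φ c) (ha : 0 ≤ a) (m : ℕ) (hm : 1 ≤ m) :
    ∃ K : ℝ, ∀ (n : ℕ) (η : ProbabilityMeasure (ℕ → A)), m ≤ n + 1 →
      (η : Measure (ℕ → A)) Y = 1 → ws_G φ (η : Measure (ℕ → A)) (n + 1) →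
      m * (a * ws_Hn (η : Measure (ℕ → A)) (n + 1) + ws_S φ (η : Measure (ℕ → A)) (n + 1)
        + Real.log c⁻¹) ≤
      ((n : ℝ) + 1) * (a * ws_Hn (ws_avg η n : Measure (ℕ → A)) m +
        ws_S φ (ws_avg η n : Measure (ℕ → A)) m + Real.log c⁻¹) + K := by
  have hc : 0 ≤ Real.log c⁻¹ := Real.log_nonneg ((one_le_inv₀ hφ.c0).2 hφ.c1)
  set C : ℕ → ℝ := fun l => ∑ w : Fin l → A, |Real.log (φ (List.ofFn w))| with hC
  set D : ℕ → ℝ := fun l => |Real.log (Fintype.card (Fin l → A))| with hD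
  have hC0 : ∀ l, 0 ≤ C l := fun l => Finset.sum_nonneg fun _ _ => abs_nonneg _
  have hD0 : ∀ l, 0 ≤ D l := fun l => abs_nonneg _
  set K := ∑ l ∈ Finset.range (m + 1), (a * D l + C l) + Real.log c⁻¹ with hK
  refine ⟨m * (2 * K) + m * C m, fun n η hmn hη hG => ?_⟩
  have hp := fun i => ws_prob_iter (η : Measure (ℕ → A)) i
  have hae := ws_ae_X hY hη
  set g : ℕ → ℕ → ℝ := fun i l => a * ws_Hn ((η : Measure (ℕ → A)).map shiftMap^[i]) l +
    ws_S φ ((η : Measure (ℕ → A)).map shiftMap^[i]) l + Real.log c⁻¹ with hg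
  have haei : ∀ i, ∀ᵐ x ∂((η : Measure (ℕ → A)).map shiftMap^[i]), x ∈ Y := by
    intro i
    refine (ae_map_iff (p := fun x => x ∈ Y) (ws_meas_iter i).aemeasurable (ws_measX hY)).2 ?_
    filter_upwards [hae] with x hx using ws_shift_mem hY i hx
  have hmm : ∀ i b, ((η : Measure (ℕ → A)).map shiftMap^[i]).map shiftMap^[b] =
      (η : Measure (ℕ → A)).map shiftMap^[i + b] := by
    intro i b
    rw [Measure.map_map (ws_meas_iter b) (ws_meas_iter i), ← Function.iterate_add, add_comm]
  have hw := ws_window g (n + 1) m K hm hmn ?_ ?_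
  · have e0 : g 0 (n + 1) = a * ws_Hn (η : Measure (ℕ → A)) (n + 1) +
        ws_S φ (η : Measure (ℕ → A)) (n + 1) + Real.log c⁻¹ := by
      simp [hg]
    rw [e0] at hw
    have hsum : ∑ i ∈ Finset.range (n + 1 + 1 - m), g i m ≤
        ∑ i ∈ Finset.range (n + 1), g i m + m * C m := by
      have hsplit := Finset.sum_range_add_sum_Ico (fun i => g i m)
        (show n + 1 + 1 - m ≤ n + 1 by omega)
      have hlow : ∀ i, -C m ≤ g i m := by
        intro i
        have h1 := ws_S_abs φ ((η : Measure (ℕ → A)).map shiftMap^[i]) m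
        have h2 := ws_Hn_nonneg ((η : Measure (ℕ → A)).map shiftMap^[i]) m
        have h3 := neg_le_of_abs_le h1
        have h4 := mul_nonneg ha h2
        simp only [hg, hC]
        linarith
      have h5 : -(m * C m) ≤ ∑ i ∈ Finset.Ico (n + 1 + 1 - m) (n + 1), g i m := by
        have h6 : ∑ i ∈ Finset.Ico (n + 1 + 1 - m) (n + 1), (-C m) ≤
          ∑ i ∈ Finset.Ico (n + 1 + 1 - m) (n + 1), g i m := Finset.sum_le_sum fun i _ => hlow i
        rw [Finset.sum_const, Nat.card_Ico, nsmul_eq_mul] at h6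
        have h7 : ((n + 1 - (n + 1 + 1 - m) : ℕ) : ℝ) ≤ m := by
          exact_mod_cast (by omega)
        have := mul_le_mul_of_nonneg_right h7 (hC0 m)
        linarith
      linarith
    have havg : ∑ i ∈ Finset.range (n + 1), g i m ≤
        ((n : ℝ) + 1) * (a * ws_Hn (ws_avg η n : Measure (ℕ → A)) m +
        ws_S φ (ws_avg η n : Measure (ℕ → A)) m + Real.log c⁻¹) := by
      simp only [hg]
      rw [Finset.sum_add_distrib, Finset.sum_add_distrib, ws_avg_S, ← Finset.mul_sum,
        Finset.sum_const, Finset.card_range, nsmul_eq_mul]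
      have := mul_le_mul_of_nonneg_left (ws_avg_Hn η n m) ha
      push_cast
      nlinarith
    linarith
  · intro i b d hi
    have hGi : ws_G φ ((η : Measure (ℕ → A)).map shiftMap^[i]) (b + d) :=
      ws_G_sub hY hφ hae (by omega) hG
    have s1 := ws_S_add hY hφ (haei i) b d hGi
    have s2 := mul_le_mul_of_nonneg_left
      (ws_Hn_add ((η : Measure (ℕ → A)).map shiftMap^[i]) b d) ha
    rw [hmm] at s1 s2
    simp only [hg]
    linarith
  · intro i l hl _
    have h1 := ws_S_abs φ ((η : Measure (ℕ → A)).map shiftMap^[i]) l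
    have h2 := ws_Hn_le ((η : Measure (ℕ → A)).map shiftMap^[i]) l
    have h3 := mul_le_mul_of_nonneg_left (h2.trans (le_abs_self _)) ha
    have h4 := (le_abs_self _).trans h1
    have h5 : a * D l + C l ≤ ∑ l ∈ Finset.range (m + 1), (a * D l + C l) :=
      Finset.single_le_sum (f := fun l => a * D l + C l)
        (fun l _ => add_nonneg (mul_nonneg ha (hD0 l)) (hC0 l)) (Finset.mem_range.2 (by omega))
    simp only [hg, hK]
    simp only [hC, hD] at h5 ⊢
    linarith

/-- windows which agree up to boundary -/
lemma ws_avg_near (η : ProbabilityMeasure (ℕ → A)) (n m : ℕ) (s : Set (ℕ → A)) (r : ℝ)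
    (hr0 : 0 ≤ r) (hr1 : r ≤ 1)
    (h : ∀ i, i + m ≤ n + 1 → ((η : Measure (ℕ → A)).map shiftMap^[i]).real s = r) :
    |(ws_avg η n : Measure (ℕ → A)).real s - r| ≤ m * (1 / ((n : ℝ) + 1)) := by
  have hp := fun i => ws_prob_iter (η : Measure (ℕ → A)) i
  have hn : (0 : ℝ) < (n : ℝ) + 1 := by positivity
  have e : (ws_avg η n : Measure (ℕ → A)).real s - r = ((n : ℝ) + 1)⁻¹ *
      ∑ i ∈ Finset.range (n + 1), (((η : Measure (ℕ → A)).map shiftMap^[i]).real s - r) := by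
    rw [ws_avg_real, Finset.sum_sub_distrib, Finset.sum_const, Finset.card_range, nsmul_eq_mul]
    push_cast
    field_simp
  rw [e, abs_mul, abs_of_pos (inv_pos.2 hn), mul_comm, one_div]
  refine mul_le_mul_of_nonneg_right ?_ (inv_pos.2 hn).le
  refine (Finset.abs_sum_le_sum_abs _ _).trans ?_
  have h1 : ∀ i ∈ Finset.range (n + 1),
      |((η : Measure (ℕ → A)).map shiftMap^[i]).real s - r| ≤
      if i + m ≤ n + 1 then 0 else 1 := by
    intro i _
    split_ifs with hi
    · rw [h i hi]; simp
    · have b1 : ((η : Measure (ℕ → A)).map shiftMap^[i]).real s ≤ 1 := measureReal_le_one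
      have b3 : 0 ≤ ((η : Measure (ℕ → A)).map shiftMap^[i]).real s := measureReal_nonneg
      rw [abs_le]; constructor <;> linarith
  refine (Finset.sum_le_sum h1).trans ?_
  have h2 : ∑ i ∈ Finset.range (n + 1), (if i + m ≤ n + 1 then (0 : ℝ) else 1) =
      (((Finset.range (n + 1)).filter (fun i => ¬ i + m ≤ n + 1)).card : ℝ) := by
    rw [Finset.card_filter]
    push_cast
    refine Finset.sum_congr rfl fun i _ => ?_
    by_cases hi : i + m ≤ n + 1 <;> simp [hi]
  rw [h2]
  have h3 : ((Finset.range (n + 1)).filter (fun i => ¬ i + m ≤ n + 1)) ⊆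
      Finset.Ico (n + 1 - m) (n + 1) := by
    intro i hi
    simp only [Finset.mem_filter, Finset.mem_range, Finset.mem_Ico] at hi ⊢
    omega
  have h4 := Finset.card_le_card h3
  rw [Nat.card_Ico] at h4
  exact_mod_cast h4.trans (by omega)

lemma ws_avg_near_lim {μ : ProbabilityMeasure (ℕ → A)} {U : Ultrafilter ℕ}
    (hU : (U : Filter ℕ) ≤ atTop) {η : ℕ → ProbabilityMeasure (ℕ → A)}
    (hlim : Tendsto (fun n => ws_avg (η n) n) U (𝓝 μ)) {m : ℕ} (w : Fin m → A) (r : ℝ)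
    (hr0 : 0 ≤ r) (hr1 : r ≤ 1)
    (h : ∀ᶠ n in atTop, ∀ i, i + m ≤ n + 1 →
      ((η n : Measure (ℕ → A)).map shiftMap^[i]).real (ws_pre m ⁻¹' {w}) = r) :
    (μ : Measure (ℕ → A)).real (ws_pre m ⁻¹' {w}) = r := by
  have t1 : Tendsto (fun n => (ws_avg (η n) n : Measure (ℕ → A)).real (ws_pre m ⁻¹' {w})) U
      (𝓝 ((μ : Measure (ℕ → A)).real (ws_pre m ⁻¹' {w}))) :=
    ((ws_cont_real w).tendsto μ).comp hlim
  have t2 : Tendsto (fun n => (ws_avg (η n) n : Measure (ℕ → A)).real (ws_pre m ⁻¹' {w}) - r) U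
      (𝓝 0) := by
    refine Tendsto.mono_left ?_ hU
    refine squeeze_zero_norm' (a := fun n : ℕ => m * (1 / ((n : ℝ) + 1))) ?_ ?_
    · filter_upwards [h] with n hn
      exact ws_avg_near (η n) n m _ r hr0 hr1 hn
    · have := (tendsto_one_div_add_atTop_nhds_zero_nat (𝕜 := ℝ)).const_mul (m : ℝ)
      simpa using this
  have := tendsto_nhds_unique (t1.sub_const r) t2
  linarith

/-- The limit of averages is good and has large pressure. -/
lemma ws_mis_lim {Y : Set (ℕ → A)} {φ : List A → ℝ} {c a : ℝ} (hY : IsSubshift Y)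
    (hφ : ws_Sub Y φ c) (ha : 0 ≤ a) {μ : ProbabilityMeasure (ℕ → A)} {U : Ultrafilter ℕ}
    (hU : (U : Filter ℕ) ≤ atTop) {η : ℕ → ProbabilityMeasure (ℕ → A)}
    (hη : ∀ n, (η n : Measure (ℕ → A)) Y = 1)
    (hlim : Tendsto (fun n => ws_avg (η n) n) U (𝓝 μ)) (L : ℝ)
    (hL : ∀ᶠ n in atTop, ws_G φ (η n : Measure (ℕ → A)) (n + 1) ∧ ((n : ℝ) + 1) * L ≤
      a * ws_Hn (η n : Measure (ℕ → A)) (n + 1) + ws_S φ (η n : Measure (ℕ → A)) (n + 1)) :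
    (∀ m, ws_G φ (μ : Measure (ℕ → A)) m) ∧ ∀ m : ℕ, m ≠ 0 →
      m * L ≤ a * ws_Hn (μ : Measure (ℕ → A)) m + ws_S φ (μ : Measure (ℕ → A)) m +
        Real.log c⁻¹ := by
  have hc : 0 ≤ Real.log c⁻¹ := Real.log_nonneg ((one_le_inv₀ hφ.c0).2 hφ.c1)
  constructor
  · intro m
    rw [ws_G_iff]
    intro w hw
    refine ws_avg_near_lim hU hlim w 0 le_rfl zero_le_one ?_
    filter_upwards [hL] with n hn i hi
    have hp := ws_prob_iter (η n : Measure (ℕ → A)) i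
    exact (ws_G_iff _ _ _).1 (ws_G_sub hY hφ (ws_ae_X hY (hη n)) hi hn.1) w hw
  · intro m hm
    obtain ⟨K, hK⟩ := ws_mis hY hφ ha m (Nat.one_le_iff_ne_zero.2 hm)
    have t1 : Tendsto (fun n => a * ws_Hn (ws_avg (η n) n : Measure (ℕ → A)) m +
        ws_S φ (ws_avg (η n) n : Measure (ℕ → A)) m + Real.log c⁻¹) U
        (𝓝 (a * ws_Hn (μ : Measure (ℕ → A)) m + ws_S φ (μ : Measure (ℕ → A)) m +
          Real.log c⁻¹)) :=
      (((((ws_cont_Hn m).tendsto μ).comp hlim).const_mul a).add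
        (((ws_cont_S φ m).tendsto μ).comp hlim)).add_const _
    have t2 : Tendsto (fun n : ℕ => K * (1 / ((n : ℝ) + 1))) U (𝓝 0) := by
      have := (tendsto_one_div_add_atTop_nhds_zero_nat (𝕜 := ℝ)).const_mul K
      rw [mul_zero] at this
      exact this.mono_left hU
    have t3 := t1.add t2
    rw [add_zero] at t3
    refine ge_of_tendsto t3 (hU ?_)
    filter_upwards [hL, eventually_ge_atTop m] with n hn hmn
    have h1 := hK n (η n) (by omega) (hη n) hn.1
    have hn0 : (0 : ℝ) < (n : ℝ) + 1 := by positivity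
    have h2 : (m : ℝ) * (((n : ℝ) + 1) * L) ≤ m * (a * ws_Hn (η n : Measure (ℕ → A)) (n + 1) +
        ws_S φ (η n : Measure (ℕ → A)) (n + 1) + Real.log c⁻¹) :=
      mul_le_mul_of_nonneg_left (by linarith [hn.2]) (Nat.cast_nonneg m)
    have h3 := h2.trans h1
    rw [← sub_nonneg] at h3 ⊢
    have h4 := mul_nonneg h3 (inv_pos.2 hn0).le
    have e : (((n : ℝ) + 1) * (a * ws_Hn (ws_avg (η n) n : Measure (ℕ → A)) m +
        ws_S φ (ws_avg (η n) n : Measure (ℕ → A)) m + Real.log c⁻¹) + K -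
        m * (((n : ℝ) + 1) * L)) * ((n : ℝ) + 1)⁻¹ =
        a * ws_Hn (ws_avg (η n) n : Measure (ℕ → A)) m +
        ws_S φ (ws_avg (η n) n : Measure (ℕ → A)) m + Real.log c⁻¹ + K * (1 / ((n : ℝ) + 1)) -
        m * L := by
      field_simp
    rw [e] at h4
    exact h4

end

/-! ### The relative variational principle -/

section
variable {A : Type} [Fintype A] [TopologicalSpace A] [DiscreteTopology A] [MeasurableSpace A]
  [BorelSpace A]
variable {C : Type} [Fintype C] [TopologicalSpace C] [DiscreteTopology C] [MeasurableSpace C]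
  [BorelSpace C]

/-- weight of a word -/
noncomputable def ws_q (Y : Set (ℕ → A)) (φ : List A → ℝ) (a : ℝ) {n : ℕ} (w : Fin n → A) : ℝ :=
  if Lang Y (List.ofFn w) then φ (List.ofFn w) ^ a⁻¹ else 0

/-- fibre of a word -/
noncomputable def ws_fib (π : A → C) {n : ℕ} (J : Fin n → C) : Finset (Fin n → A) :=
  Finset.univ.filter fun w => (fun i => π (w i)) = J

/-- fibre sum -/
noncomputable def ws_Z (Y : Set (ℕ → A)) (π : A → C) (φ : List A → ℝ) (a : ℝ) {n : ℕ}
    (J : Fin n → C) : ℝ := ∑ w ∈ ws_fib π J, ws_q Y φ a w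

lemma ws_phiTwo (Y : Set (ℕ → A)) (π : A → C) (φ : List A → ℝ) (a : ℝ) {n : ℕ}
    (J : Fin n → C) : phiTwo Y π φ a (List.ofFn J) = (ws_Z Y π φ a J) ^ a := by
  have gen : ∀ (I : List C) (n : ℕ) (_ : I.length = n), phiTwo Y π φ a I =
      (∑ w : Fin n → A, if Lang Y (List.ofFn w) ∧ List.map π (List.ofFn w) = I
        then φ (List.ofFn w) ^ a⁻¹ else 0) ^ a := by
    intro I n h
    subst h
    rfl
  rw [gen _ n (by simp)]
  congr 1
  unfold ws_Z ws_fib ws_q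
  rw [Finset.sum_filter]
  refine Finset.sum_congr rfl fun w _ => ?_
  have : List.map π (List.ofFn w) = List.ofFn J ↔ (fun i => π (w i)) = J := by
    rw [List.map_ofFn, List.ofFn_inj]
    rfl
  by_cases h1 : Lang Y (List.ofFn w) <;> by_cases h2 : (fun i => π (w i)) = J
  · rw [if_pos ⟨h1, this.2 h2⟩, if_pos h2, if_pos h1]
  · rw [if_neg (fun h => h2 (this.1 h.2)), if_neg h2]
  · rw [if_neg (fun h => h1 h.1), if_pos h2, if_neg h1]
  · rw [if_neg (fun h => h1 h.1), if_neg h2]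

lemma ws_q_nonneg {Y : Set (ℕ → A)} {φ : List A → ℝ} (hφ : ∀ I, Lang Y I → 0 ≤ φ I) (a : ℝ)
    {n : ℕ} (w : Fin n → A) : 0 ≤ ws_q Y φ a w := by
  unfold ws_q
  split_ifs with h
  · exact Real.rpow_nonneg (hφ _ h) _
  · exact le_rfl

lemma ws_Z_nonneg {Y : Set (ℕ → A)} (π : A → C) {φ : List A → ℝ}
    (hφ : ∀ I, Lang Y I → 0 ≤ φ I) (a : ℝ)
    {n : ℕ} (J : Fin n → C) : 0 ≤ ws_Z Y π φ a J :=
  Finset.sum_nonneg fun w _ => ws_q_nonneg hφ a w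

lemma ws_log_rpow {x a : ℝ} (hx : 0 ≤ x) (ha : a ≠ 0) : Real.log (x ^ a) = a * Real.log x := by
  rcases hx.eq_or_lt with h | h
  · rw [← h, Real.zero_rpow ha]; simp
  · exact Real.log_rpow h a

lemma ws_sum_fib (π : A → C) {n : ℕ} (f : (Fin n → A) → ℝ) :
    ∑ J : Fin n → C, ∑ w ∈ ws_fib π J, f w = ∑ w, f w :=
  Finset.sum_fiberwise _ _ _

lemma ws_fib_real (π : A → C) (η : Measure (ℕ → A)) [IsProbabilityMeasure η] {n : ℕ}
    (J : Fin n → C) : (η.map (blockMap π)).real (ws_pre n ⁻¹' {J}) =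
      ∑ w ∈ ws_fib π J, η.real (ws_pre n ⁻¹' {w}) := by
  rw [map_measureReal_apply (ws_meas_block π) (ws_meas_pre n .of_discrete)]
  rw [← measureReal_biUnion_finset]
  · congr 1
    ext x
    simp only [ws_fib, Set.mem_preimage, Set.mem_singleton_iff, Set.mem_iUnion,
      Finset.mem_filter, Finset.mem_univ, true_and, exists_prop]
    exact ⟨fun h => ⟨ws_pre n x, h, rfl⟩, fun ⟨w, h1, h2⟩ => by rw [← h1, ← h2]; rfl⟩
  · intro w _ w' _ hne
    exact Disjoint.preimage _ (by simpa using hne)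
  · intro w _
    exact ws_meas_pre n .of_discrete

lemma ws_real_zero {Y : Set (ℕ → A)} (hY : IsSubshift Y) {η : Measure (ℕ → A)}
    [IsProbabilityMeasure η] (h : η Y = 1) {n : ℕ} {w : Fin n → A}
    (hw : ¬ Lang Y (List.ofFn w)) : η.real (ws_pre n ⁻¹' {w}) = 0 := by
  rw [measureReal_eq_zero_iff]
  refine measure_mono_null ?_ (ws_ae_X hY h)
  intro x hx hxY
  exact hw ⟨x, by rw [ws_cyl]; exact hx, hxY⟩

lemma ws_fin_upper {Y : Set (ℕ → A)} (π : A → C) {φ : List A → ℝ} (hY : IsSubshift Y)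
    (hφ : ∀ I, Lang Y I → 0 ≤ φ I) {a : ℝ} (ha : 0 < a) {η : Measure (ℕ → A)}
    [IsProbabilityMeasure η] (h : η Y = 1) (n : ℕ) (hG : ws_G φ η n) :
    ws_G (phiTwo Y π φ a) (η.map (blockMap π)) n ∧
    a * ws_Hn η n + ws_S φ η n ≤ a * ws_Hn (η.map (blockMap π)) n +
      ws_S (phiTwo Y π φ a) (η.map (blockMap π)) n := by
  have hp := ws_prob_map η π
  have hai : a⁻¹ ≠ 0 := inv_ne_zero ha.ne'
  have hq0 : ∀ w : Fin n → A, ws_q Y φ a w = 0 → η.real (ws_pre n ⁻¹' {w}) = 0 := by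
    intro w hw
    by_cases hl : Lang Y (List.ofFn w)
    · rw [ws_q, if_pos hl, Real.rpow_eq_zero (hφ _ hl) hai] at hw
      exact (ws_G_iff _ _ _).1 hG w hw.le
    · exact ws_real_zero hY h hl
  constructor
  · rw [ws_G_iff]
    intro J hJ
    rw [ws_phiTwo] at hJ
    have hZ : ws_Z Y π φ a J = 0 := by
      by_contra hne
      exact absurd hJ (not_le.2 (Real.rpow_pos_of_pos
        (lt_of_le_of_ne (ws_Z_nonneg π hφ a J) (Ne.symm hne)) a))
    rw [ws_fib_real]
    refine Finset.sum_eq_zero fun w hw => hq0 w ?_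
    exact (Finset.sum_eq_zero_iff_of_nonneg fun w _ => ws_q_nonneg hφ a w).1 hZ w hw
  · rw [ws_S_sum, ws_S_sum, ws_Hn, ws_Hn, ws_Hd, ws_Hd, Finset.mul_sum, Finset.mul_sum,
      ← Finset.sum_add_distrib, ← Finset.sum_add_distrib, ← ws_sum_fib π]
    refine Finset.sum_le_sum fun J _ => ?_
    have hl := ws_logsum (ws_fib π J) (fun w => η.real (ws_pre n ⁻¹' {w})) (ws_q Y φ a)
      (fun _ _ => measureReal_nonneg) (fun w _ => ws_q_nonneg hφ a w) (fun w _ => hq0 w)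
    rw [ws_fib_real, ws_phiTwo, ws_log_rpow (ws_Z_nonneg π hφ a J) ha.ne']
    have hl2 := mul_le_mul_of_nonneg_left hl ha.le
    rw [Finset.mul_sum] at hl2
    refine le_trans (le_of_eq ?_) (hl2.trans (le_of_eq ?_))
    · refine Finset.sum_congr rfl fun w _ => ?_
      by_cases hl : Lang Y (List.ofFn w)
      · rw [ws_q, if_pos hl, ws_log_rpow (hφ _ hl) hai]
        field_simp
        ring
      · rw [ws_real_zero hY h hl]; simp
    · unfold ws_Z; ring

end

section
variable {A : Type} [Fintype A] [TopologicalSpace A] [DiscreteTopology A] [MeasurableSpace A]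
  [BorelSpace A]
variable {C : Type} [Fintype C] [TopologicalSpace C] [DiscreteTopology C] [MeasurableSpace C]
  [BorelSpace C]

/-- a measure with prescribed word weights -/
lemma ws_build {Y : Set (ℕ → A)} (hY : IsSubshift Y) {n : ℕ} (p : (Fin n → A) → ℝ)
    (hp : ∀ w, 0 ≤ p w) (hl : ∀ w, ¬ Lang Y (List.ofFn w) → p w = 0) (h1 : ∑ w, p w = 1) :
    ∃ η : ProbabilityMeasure (ℕ → A), (η : Measure (ℕ → A)) Y = 1 ∧
      ∀ w, (η : Measure (ℕ → A)).real (ws_pre n ⁻¹' {w}) = p w := by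
  obtain ⟨y, hy⟩ := hY.1
  have hx : ∀ w : Fin n → A, ∃ x ∈ Y, Lang Y (List.ofFn w) → ws_pre n x = w := by
    intro w
    by_cases h : Lang Y (List.ofFn w)
    · obtain ⟨x, hx1, hx2⟩ := h
      rw [ws_cyl] at hx1
      exact ⟨x, hx2, fun _ => hx1⟩
    · exact ⟨y, hy, fun h' => absurd h' h⟩
  choose x hxY hxw using hx
  have hs : ∑ w, ENNReal.ofReal (p w) = 1 := by
    rw [← ENNReal.ofReal_sum_of_nonneg fun w _ => hp w, h1, ENNReal.ofReal_one]
  have happ : ∀ s : Set (ℕ → A), MeasurableSet s →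
      (∑ w, ENNReal.ofReal (p w) • Measure.dirac (x w)) s =
      ∑ w, ENNReal.ofReal (p w) * s.indicator 1 (x w) := by
    intro s hs
    simp only [Measure.coe_finsetSum, Finset.sum_apply, Measure.coe_smul, Pi.smul_apply,
      smul_eq_mul, Measure.dirac_apply' _ hs]
  refine ⟨⟨∑ w, ENNReal.ofReal (p w) • Measure.dirac (x w), ⟨?_⟩⟩, ?_, ?_⟩
  · rw [happ _ MeasurableSet.univ]; simpa using hs
  · refine (happ _ (ws_measX hY)).trans ?_
    simpa [hxY] using hs
  · intro w
    have : (∑ w, ENNReal.ofReal (p w) • Measure.dirac (x w)) (ws_pre n ⁻¹' {w}) =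
        ENNReal.ofReal (p w) := by
      rw [happ _ (ws_meas_pre n .of_discrete), Finset.sum_eq_single w]
      · by_cases h : Lang Y (List.ofFn w)
        · simp [Set.indicator, hxw w h]
        · simp [hl w h]
      · intro w' _ hne
        by_cases h : Lang Y (List.ofFn w')
        · simp [Set.indicator, hxw w' h, hne]
        · simp [hl w' h]
      · simp
    exact (congrArg ENNReal.toReal this).trans (ENNReal.toReal_ofReal (hp w))

lemma ws_fin_lower {Y : Set (ℕ → A)} (π : A → C) {φ : List A → ℝ} (hY : IsSubshift Y)
    (hφ : ∀ I, Lang Y I → 0 ≤ φ I) {a : ℝ} (ha : 0 < a) (hZ : IsSubshift (blockMap π '' Y))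
    (ν : ProbabilityMeasure (ℕ → C))
    (hν : (ν : Measure (ℕ → C)) (blockMap π '' Y) = 1) (n : ℕ) :
    ∃ η : ProbabilityMeasure (ℕ → A), (η : Measure (ℕ → A)) Y = 1 ∧
      (∀ J, ((η : Measure (ℕ → A)).map (blockMap π)).real (ws_pre n ⁻¹' {J}) =
        (ν : Measure (ℕ → C)).real (ws_pre n ⁻¹' {J})) ∧
      (ws_G (phiTwo Y π φ a) (ν : Measure (ℕ → C)) n → ws_G φ (η : Measure (ℕ → A)) n ∧
        a * ws_Hn (ν : Measure (ℕ → C)) n + ws_S (phiTwo Y π φ a) (ν : Measure (ℕ → C)) n ≤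
        a * ws_Hn (η : Measure (ℕ → A)) n + ws_S φ (η : Measure (ℕ → A)) n) := by
  have hai : a⁻¹ ≠ 0 := inv_ne_zero ha.ne'
  set P : (Fin n → C) → ℝ := fun J => (ν : Measure (ℕ → C)).real (ws_pre n ⁻¹' {J}) with hP
  have hP0 : ∀ J, 0 ≤ P J := fun J => measureReal_nonneg
  set ω : (Fin n → C) → (Fin n → A) → ℝ := fun J w =>
    if 0 < ws_Z Y π φ a J then ws_q Y φ a w else if Lang Y (List.ofFn w) then 1 else 0 with hω
  have hω0 : ∀ J w, 0 ≤ ω J w := by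
    intro J w
    simp only [hω]
    split_ifs
    · exact ws_q_nonneg hφ a w
    · exact zero_le_one
    · exact le_rfl
  have hωl : ∀ J w, ¬ Lang Y (List.ofFn w) → ω J w = 0 := by
    intro J w h
    simp [hω, ws_q, h]
  set W : (Fin n → C) → ℝ := fun J => ∑ w ∈ ws_fib π J, ω J w with hW
  have hW0 : ∀ J, 0 ≤ W J := fun J => Finset.sum_nonneg fun w _ => hω0 J w
  have hWp : ∀ J, P J ≠ 0 → 0 < W J := by
    intro J hJ
    by_cases h : 0 < ws_Z Y π φ a J
    · have : W J = ws_Z Y π φ a J := 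
        Finset.sum_congr rfl fun w _ => if_pos h
      rw [this]; exact h
    · have hL : Lang (blockMap π '' Y) (List.ofFn J) := by
        by_contra hc
        exact hJ (ws_real_zero hZ hν hc)
      obtain ⟨_, hx1, ⟨x, hx, rfl⟩⟩ := hL
      rw [ws_cyl] at hx1
      have hxw : ws_pre n x ∈ ws_fib π J := by
        simp only [ws_fib, Finset.mem_filter, Finset.mem_univ, true_and]
        exact hx1
      have : ω J (ws_pre n x) ≤ W J :=
        Finset.single_le_sum (f := fun w => ω J w) (fun w _ => hω0 J w) hxw
      have e : ω J (ws_pre n x) = 1 := by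
        simp only [hω]
        rw [if_neg h, if_pos (show Lang Y (List.ofFn (ws_pre n x)) from ws_lang_wordOf hx n)]
      linarith
  set p : (Fin n → A) → ℝ := fun w =>
    P (fun i => π (w i)) * (ω (fun i => π (w i)) w / W (fun i => π (w i))) with hp
  have hp0 : ∀ w, 0 ≤ p w := fun w => mul_nonneg (hP0 _) (div_nonneg (hω0 _ _) (hW0 _))
  have hpl : ∀ w, ¬ Lang Y (List.ofFn w) → p w = 0 := fun w h => by
    simp only [hp]; rw [hωl _ _ h]; simp
  have hpJ : ∀ J, ∀ w ∈ ws_fib π J, p w = P J * (ω J w / W J) := by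
    intro J w hw
    simp only [ws_fib, Finset.mem_filter, Finset.mem_univ, true_and] at hw
    simp only [hp]
    rw [hw]
  have hfib : ∀ J, ∑ w ∈ ws_fib π J, p w = P J := by
    intro J
    rw [Finset.sum_congr rfl (hpJ J), ← Finset.mul_sum, ← Finset.sum_div]
    by_cases h : P J = 0
    · rw [h]; simp
    · have := hWp J h
      show P J * (W J / W J) = P J
      rw [div_self this.ne', mul_one]
  have hp1 : ∑ w, p w = 1 := by
    rw [← ws_sum_fib π, Finset.sum_congr rfl fun J _ => hfib J]
    exact ws_sum_one (ν : Measure (ℕ → C)) (ws_meas_pre n)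
  obtain ⟨η, hη1, hη2⟩ := ws_build hY p hp0 hpl hp1
  refine ⟨η, hη1, fun J => ?_, fun hG => ?_⟩
  · rw [ws_fib_real, Finset.sum_congr rfl fun w _ => hη2 w]
    exact hfib J
  · have hZp : ∀ J, P J ≠ 0 → 0 < ws_Z Y π φ a J := by
      intro J hJ
      by_contra hcon
      have h0 : ws_Z Y π φ a J = 0 := le_antisymm (not_lt.1 hcon) (ws_Z_nonneg π hφ a J)
      refine hJ ((ws_G_iff _ _ _).1 hG J ?_)
      rw [ws_phiTwo, h0, Real.zero_rpow ha.ne']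
    have hpq : ∀ J, ∀ w ∈ ws_fib π J, P J ≠ 0 → p w = P J * (ws_q Y φ a w / ws_Z Y π φ a J) := by
      intro J w hw hJ
      have hz := hZp J hJ
      have e1 : ω J w = ws_q Y φ a w := if_pos hz
      have e2 : W J = ws_Z Y π φ a J := 
        Finset.sum_congr rfl fun w _ => if_pos hz
      rw [hpJ J w hw, e1, e2]
    constructor
    · rw [ws_G_iff]
      intro w hw
      rw [hη2]
      by_cases hl : Lang Y (List.ofFn w)
      · have h0 : φ (List.ofFn w) = 0 := le_antisymm hw (hφ _ hl)
        have hmem : w ∈ ws_fib π (fun i => π (w i)) := by simp [ws_fib]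
        by_cases hJ : P (fun i => π (w i)) = 0
        · rw [hpJ _ w hmem, hJ, zero_mul]
        · rw [hpq _ w hmem hJ, ws_q, if_pos hl, h0, Real.zero_rpow hai]; simp
      · exact hpl w hl
    · refine le_of_eq ?_
      rw [ws_S_sum, ws_S_sum, ws_Hn, ws_Hn, ws_Hd, ws_Hd, Finset.mul_sum, Finset.mul_sum,
        ← Finset.sum_add_distrib, ← Finset.sum_add_distrib, ← ws_sum_fib π]
      refine Finset.sum_congr rfl fun J _ => ?_
      simp only [hη2]
      have key : ∀ w ∈ ws_fib π J, a * Real.negMulLog (p w) + p w * Real.log (φ (List.ofFn w)) =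
          p w * (Real.log (phiTwo Y π φ a (List.ofFn J)) - a * Real.log (P J)) := by
        intro w hw
        by_cases h0 : p w = 0
        · rw [h0]; simp
        have hJ : P J ≠ 0 := fun h => h0 (by rw [hpJ J w hw, h, zero_mul])
        have hl : Lang Y (List.ofFn w) := by
          by_contra h
          exact h0 (hpl w h)
        have e := hpq J w hw hJ
        have hz := hZp J hJ
        have hq : ws_q Y φ a w ≠ 0 := fun h => h0 (by rw [e, h]; simp)
        have elog : Real.log (p w) =
            Real.log (P J) + (Real.log (ws_q Y φ a w) - Real.log (ws_Z Y π φ a J)) := by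
          rw [e, Real.log_mul hJ (div_ne_zero hq hz.ne'), Real.log_div hq hz.ne']
        have eq : Real.log (ws_q Y φ a w) = a⁻¹ * Real.log (φ (List.ofFn w)) := by
          rw [ws_q, if_pos hl, ws_log_rpow (hφ _ hl) hai]
        rw [ws_phiTwo, ws_log_rpow hz.le ha.ne', Real.negMulLog, elog, eq]
        field_simp
        ring
      rw [Finset.sum_congr rfl key, ← Finset.sum_mul, hfib, Real.negMulLog]
      ring

lemma ws_avg_push (π : A → C) (η : ProbabilityMeasure (ℕ → A)) (n : ℕ) :
    ws_avg (η.map (ws_meas_block π).aemeasurable) n =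
      (ws_avg η n).map (ws_meas_block π).aemeasurable := by
  refine Subtype.ext ?_
  show (((n + 1 : ℕ) : ℝ≥0∞)⁻¹ • ∑ i ∈ Finset.range (n + 1),
    ((η : Measure (ℕ → A)).map (blockMap π)).map shiftMap^[i]) =
    (((n + 1 : ℕ) : ℝ≥0∞)⁻¹ • ∑ i ∈ Finset.range (n + 1),
      (η : Measure (ℕ → A)).map shiftMap^[i]).map (blockMap π)
  rw [Measure.map_smul]
  congr 1
  refine Eq.trans ?_ ((Measure.mapₗ_apply_of_measurable (ws_meas_block π) _).symm.trans
    (map_sum _ _ _)).symm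
  refine Finset.sum_congr rfl fun i _ => ?_
  rw [Measure.mapₗ_apply_of_measurable (ws_meas_block π), ws_map_comm]

lemma ws_lift {Y : Set (ℕ → A)} (π : A → C) {φ : List A → ℝ} {c : ℝ} (hY : IsSubshift Y)
    (hφ : ws_Sub Y φ c) {a : ℝ} (ha : 0 < a) (hZ : IsSubshift (blockMap π '' Y))
    {ν : ProbabilityMeasure (ℕ → C)} (hν : ν ∈ MInv (blockMap π '' Y)) :
    ∃ μ ∈ MInv Y, pushM π μ = (ν : Measure (ℕ → C)) ∧ ∀ L : ℝ,
      (∀ᶠ n in atTop, ws_G (phiTwo Y π φ a) (ν : Measure (ℕ → C)) n ∧ (n : ℝ) * L ≤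
        a * ws_Hn (ν : Measure (ℕ → C)) n + ws_S (phiTwo Y π φ a) (ν : Measure (ℕ → C)) n) →
      (∀ m, ws_G φ (μ : Measure (ℕ → A)) m) ∧ ∀ m : ℕ, m ≠ 0 →
      m * L ≤ a * ws_Hn (μ : Measure (ℕ → A)) m + ws_S φ (μ : Measure (ℕ → A)) m +
        Real.log c⁻¹ := by
  choose η h1 h2 h3 using fun n => ws_fin_lower π hY hφ.nonneg ha hZ ν hν.2 (n + 1)
  obtain ⟨μ, hμ, U, hU, hlim⟩ := ws_limit hY η h1
  refine ⟨μ, hμ, ?_, fun L hL => ?_⟩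
  · have hpp := ws_prob_map (μ : Measure (ℕ → A)) π
    unfold pushM
    refine ws_ext fun m J => ?_
    have hlim2 : Tendsto (fun n => ws_avg ((η n).map (ws_meas_block π).aemeasurable) n) U
        (𝓝 (μ.map (ws_meas_block π).aemeasurable)) := by
      simp_rw [ws_avg_push]
      exact ((ProbabilityMeasure.continuous_map (ws_cont_block π)).tendsto μ).comp hlim
    refine ws_avg_near_lim hU hlim2 J _ measureReal_nonneg measureReal_le_one ?_
    refine Eventually.of_forall fun n i hi => ?_
    have hpn := ws_prob_map (η n : Measure (ℕ → A)) π
    have hmap : ((η n : Measure (ℕ → A)).map (blockMap π)).map (ws_pre (n + 1)) =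
        (ν : Measure (ℕ → C)).map (ws_pre (n + 1)) := by
      refine Measure.ext_of_singleton fun w => ?_
      rw [Measure.map_apply (ws_meas_pre _) .of_discrete,
        Measure.map_apply (ws_meas_pre _) .of_discrete]
      exact (measureReal_eq_measureReal_iff (by finiteness) (by finiteness)).1 (h2 n w)
    have hset : (shiftMap^[i] : (ℕ → C) → (ℕ → C)) ⁻¹' (ws_pre m ⁻¹' {J}) =
        ws_pre (n + 1) ⁻¹' {w | ∀ l : Fin m, w ⟨l + i, by omega⟩ = J l} := by
      ext x
      simp only [Set.mem_preimage, Set.mem_singleton_iff, ws_pre, funext_iff, ws_shift_iter,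
        Set.mem_ofPred_eq]
    have e1 : ((η n : Measure (ℕ → A)).map (blockMap π)).real
        (shiftMap^[i] ⁻¹' (ws_pre m ⁻¹' {J})) =
        (ν : Measure (ℕ → C)).real (shiftMap^[i] ⁻¹' (ws_pre m ⁻¹' {J})) := by
      rw [hset, ← map_measureReal_apply (ws_meas_pre _) .of_discrete, hmap,
        map_measureReal_apply (ws_meas_pre _) .of_discrete]
    have e2 : (((η n : Measure (ℕ → A)).map (blockMap π)).map shiftMap^[i]).real
        (ws_pre m ⁻¹' {J}) = (ν : Measure (ℕ → C)).real (ws_pre m ⁻¹' {J}) := by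
      rw [map_measureReal_apply (ws_meas_iter i) (ws_meas_pre m .of_discrete), e1,
        ← map_measureReal_apply (ws_meas_iter i) (ws_meas_pre m .of_discrete),
        ws_map_iter hν.1]
    exact e2
  · refine ws_mis_lim hY hφ ha.le hU h1 hlim L ?_
    have := (tendsto_add_atTop_nat 1).eventually hL
    filter_upwards [this] with n hn
    obtain ⟨g, v⟩ := h3 n hn.1
    refine ⟨g, le_trans ?_ v⟩
    have := hn.2
    push_cast at this
    exact this

end

lemma ws_liminf_add {s h : ℕ → ℝ} {H : ℝ} (hh : Tendsto h atTop (𝓝 H)) :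
    liminf (fun n => ((s n : ℝ) : EReal)) atTop + (H : EReal) =
      liminf (fun n => ((s n + h n : ℝ) : EReal)) atTop := by
  have key : ∀ (s h : ℕ → ℝ) (H : ℝ), Tendsto h atTop (𝓝 H) →
      liminf (fun n => ((s n : ℝ) : EReal)) atTop + (H : EReal) ≤
        liminf (fun n => ((s n + h n : ℝ) : EReal)) atTop := by
    intro s h H hh
    have e : liminf (fun n => ((h n : ℝ) : EReal)) atTop = (H : EReal) :=
      ((continuous_coe_real_ereal.tendsto H).comp hh).liminf_eq
    rw [← e]
    refine EReal.le_liminf_add.trans (le_of_eq ?_)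
    congr 1
  refine le_antisymm (key s h H hh) ?_
  have h2 := key (fun n => s n + h n) (fun n => - h n) (-H) hh.neg
  simp only [add_neg_cancel_right] at h2
  have h3 := add_le_add h2 (le_refl (H : EReal))
  refine le_trans (le_of_eq ?_) h3
  rw [add_assoc, ← EReal.coe_add]
  simp

section
variable {A : Type} [Fintype A] [TopologicalSpace A] [DiscreteTopology A] [MeasurableSpace A]
  [BorelSpace A]
variable {C : Type} [Fintype C] [TopologicalSpace C] [DiscreteTopology C] [MeasurableSpace C]
  [BorelSpace C]

noncomputable def ws_W (Y : Set (ℕ → A)) (φ : List A → ℝ) (a : ℝ) (μ : Measure (ℕ → A)) : EReal :=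
  PhiStar μ (genPot φ) + ((a * ent Y μ : ℝ) : EReal)

lemma ws_W_bad (Y : Set (ℕ → A)) (φ : List A → ℝ) (a : ℝ) (μ : Measure (ℕ → A))
    [IsFiniteMeasure μ] (h : ∃ᶠ n in atTop, ¬ ws_G φ μ n) : ws_W Y φ a μ = ⊥ := by
  rw [ws_W, ws_Phi_bad φ μ h, EReal.bot_add]

lemma ws_W_good {Y : Set (ℕ → A)} (hY : IsSubshift Y) (φ : List A → ℝ) (a : ℝ)
    {μ : ProbabilityMeasure (ℕ → A)} (hμ : μ ∈ MInv Y)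
    (h : ∀ᶠ n in atTop, ws_G φ (μ : Measure (ℕ → A)) n) :
    ws_W Y φ a (μ : Measure (ℕ → A)) = liminf (fun n : ℕ =>
      (((a * ws_Hn (μ : Measure (ℕ → A)) n + ws_S φ (μ : Measure (ℕ → A)) n) / n : ℝ) : EReal))
      atTop := by
  rw [ws_W, ws_Phi_good φ _ h, ws_liminf_add ((ws_ent hY hμ.2 hμ.1).const_mul a)]
  congr 1
  funext n
  congr 1
  ring

lemma ws_W_upper {Y : Set (ℕ → A)} (π : A → C) {φ : List A → ℝ} (hY : IsSubshift Y)
    (hφ : ∀ I, Lang Y I → 0 ≤ φ I) {a : ℝ} (ha : 0 < a) (hZ : IsSubshift (blockMap π '' Y))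
    {μ : ProbabilityMeasure (ℕ → A)} (hμ : μ ∈ MInv Y) {ν : ProbabilityMeasure (ℕ → C)}
    (hν : ν ∈ MInv (blockMap π '' Y)) (hp : pushM π μ = (ν : Measure (ℕ → C))) :
    ws_W Y φ a (μ : Measure (ℕ → A)) ≤
      ws_W (blockMap π '' Y) (phiTwo Y π φ a) a (ν : Measure (ℕ → C)) := by
  by_cases hG : ∀ᶠ n in atTop, ws_G φ (μ : Measure (ℕ → A)) n
  · have hu : ∀ n, ws_G φ (μ : Measure (ℕ → A)) n → _ := fun n hn =>
      ws_fin_upper π hY hφ ha hμ.2 n hn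
    unfold pushM at hp
    rw [hp] at hu
    have hG2 : ∀ᶠ n in atTop, ws_G (phiTwo Y π φ a) (ν : Measure (ℕ → C)) n :=
      hG.mono fun n hn => (hu n hn).1
    rw [ws_W_good hY φ a hμ hG, ws_W_good hZ _ a hν hG2]
    refine liminf_le_liminf (hG.mono fun n hn => ?_)
    rw [EReal.coe_le_coe_iff]
    exact div_le_div_of_nonneg_right (hu n hn).2 (Nat.cast_nonneg n)
  · rw [ws_W_bad _ _ _ _ (not_eventually.1 hG)]
    exact bot_le

lemma ws_W_lower {Y : Set (ℕ → A)} (π : A → C) {φ : List A → ℝ} {c : ℝ} (hY : IsSubshift Y)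
    (hφ : ws_Sub Y φ c) {a : ℝ} (ha : 0 < a) (hZ : IsSubshift (blockMap π '' Y))
    {ν : ProbabilityMeasure (ℕ → C)} (hν : ν ∈ MInv (blockMap π '' Y)) :
    ∃ μ ∈ MInv Y, pushM π μ = (ν : Measure (ℕ → C)) ∧
      ws_W (blockMap π '' Y) (phiTwo Y π φ a) a (ν : Measure (ℕ → C)) ≤
        ws_W Y φ a (μ : Measure (ℕ → A)) := by
  obtain ⟨μ, hμ, hp, hL⟩ := ws_lift π hY hφ ha hZ hν
  refine ⟨μ, hμ, hp, ?_⟩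
  by_cases hG : ∀ᶠ n in atTop, ws_G (phiTwo Y π φ a) (ν : Measure (ℕ → C)) n
  · rw [ws_W_good hZ _ a hν hG]
    refine le_of_forall_lt fun y hy => ?_
    obtain ⟨L, hL1, hL2⟩ := EReal.lt_iff_exists_real_btwn.1 hy
    refine hL1.trans_le ?_
    have hev := eventually_lt_of_lt_liminf hL2
    obtain ⟨g, v⟩ := hL L (by
      filter_upwards [hev, hG, eventually_gt_atTop 0] with n h1 h2 h3
      refine ⟨h2, ?_⟩
      rw [EReal.coe_lt_coe_iff, lt_div_iff₀ (by exact_mod_cast h3)] at h1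
      linarith)
    rw [ws_W_good hY φ a hμ (Eventually.of_forall g)]
    have hlim : Tendsto (fun m : ℕ => ((L - Real.log c⁻¹ / m : ℝ) : EReal)) atTop
        (𝓝 (L : EReal)) := by
      refine (continuous_coe_real_ereal.tendsto L).comp ?_
      have := (tendsto_const_div_atTop_nhds_zero_nat (Real.log c⁻¹)).const_sub L
      simpa using this
    rw [← hlim.liminf_eq]
    refine liminf_le_liminf ((eventually_gt_atTop 0).mono fun m hm => ?_)
    rw [EReal.coe_le_coe_iff]
    have hm' : (0 : ℝ) < m := by exact_mod_cast hm
    rw [le_div_iff₀ hm', sub_mul, div_mul_cancel₀ _ hm'.ne']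
    have := v m hm.ne'
    linarith
  · rw [ws_W_bad _ _ _ _ (not_eventually.1 hG)]
    exact bot_le

lemma ws_sc {Y : Set (ℕ → A)} {φ : List A → ℝ} (hY : IsSubshift Y)
    (hφ : ∀ I, Lang Y I → 0 ≤ φ I) {a : ℝ} (ha : 0 < a)
    {μ : ProbabilityMeasure (ℕ → A)} (hμ : μ ∈ MInv Y) :
    ws_W Y φ a (μ : Measure (ℕ → A)) = (a : EReal) * eqVal Y (scPot a⁻¹ (genPot φ)) μ := by
  have hai : (0 : ℝ) < a⁻¹ := inv_pos.2 ha
  have hX := ws_ae_X hY hμ.2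
  set ψ : List A → ℝ := fun I => φ I ^ a⁻¹ with hψ
  have e0 : eqVal Y (scPot a⁻¹ (genPot φ)) μ = ws_W Y ψ 1 (μ : Measure (ℕ → A)) := by
    rw [ws_W, one_mul]; rfl
  have hGG : ∀ n, ws_G ψ (μ : Measure (ℕ → A)) n ↔ ws_G φ (μ : Measure (ℕ → A)) n := by
    intro n
    refine eventually_congr ?_
    filter_upwards [hX] with x hx
    have h0 := hφ _ (ws_lang_wordOf hx n)
    refine ⟨fun h => lt_of_le_of_ne h0 fun h' => ?_, fun h => Real.rpow_pos_of_pos h _⟩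
    simp only [hψ] at h
    rw [← h', Real.zero_rpow hai.ne'] at h
    exact lt_irrefl _ h
  have hSS : ∀ n, ws_S ψ (μ : Measure (ℕ → A)) n = a⁻¹ * ws_S φ (μ : Measure (ℕ → A)) n := by
    intro n
    unfold ws_S
    rw [← integral_const_mul]
    refine integral_congr_ae ?_
    filter_upwards [hX] with x hx
    exact ws_log_rpow (hφ _ (ws_lang_wordOf hx n)) hai.ne'
  rw [e0]
  by_cases hG : ∀ᶠ n in atTop, ws_G φ (μ : Measure (ℕ → A)) n
  · have hG' : ∀ᶠ n in atTop, ws_G ψ (μ : Measure (ℕ → A)) n := hG.mono fun n hn => (hGG n).2 hn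
    rw [ws_W_good hY φ a hμ hG, ws_W_good hY ψ 1 hμ hG',
      ← EReal.liminf_const_mul_of_nonneg_of_ne_top (by exact_mod_cast ha.le) (EReal.coe_ne_top a)]
    congr 1
    funext n
    rw [← EReal.coe_mul, hSS]
    congr 1
    field_simp
  · have hG' : ∃ᶠ n in atTop, ¬ ws_G ψ (μ : Measure (ℕ → A)) n :=
      (not_eventually.1 hG).mono fun n hn h => hn ((hGG n).1 h)
    rw [ws_W_bad _ _ _ _ (not_eventually.1 hG), ws_W_bad _ _ _ _ hG',
      EReal.coe_mul_bot_of_pos ha]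

lemma ws_sc_le {a : ℝ} (ha : 0 < a) {x y : EReal} : (a : EReal) * x ≤ a * y ↔ x ≤ y := by
  constructor
  · intro h
    have h2 := mul_le_mul_of_nonneg_left h (a := ((a⁻¹ : ℝ) : EReal))
      (by exact_mod_cast (inv_pos.2 ha).le)
    rwa [← mul_assoc, ← mul_assoc, ← EReal.coe_mul, inv_mul_cancel₀ ha.ne', EReal.coe_one,
      one_mul, one_mul] at h2
  · intro h
    exact mul_le_mul_of_nonneg_left h (by exact_mod_cast ha.le)

lemma ws_cond_iff {Y : Set (ℕ → A)} (π : A → C) {φ : List A → ℝ} (hY : IsSubshift Y)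
    (hφ : ∀ I, Lang Y I → 0 ≤ φ I) {a : ℝ} (ha : 0 < a)
    {μ : ProbabilityMeasure (ℕ → A)} {ν : Measure (ℕ → C)} :
    μ ∈ CondEqSet Y π (scPot a⁻¹ (genPot φ)) ν ↔ μ ∈ MInv Y ∧ pushM π μ = ν ∧
      ∀ η ∈ MInv Y, pushM π η = ν →
        ws_W Y φ a (η : Measure (ℕ → A)) ≤ ws_W Y φ a (μ : Measure (ℕ → A)) := by
  unfold CondEqSet
  simp only [Set.mem_ofPred_eq]
  refine and_congr_right fun hμ => and_congr_right fun hp => ?_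
  constructor
  · intro h η hη hpη
    rw [ws_sc hY hφ ha hη, ws_sc hY hφ ha hμ, ws_sc_le ha, h]
    exact le_iSup₂_of_le η ⟨hη, hpη⟩ le_rfl
  · intro h
    refine le_antisymm (le_iSup₂_of_le μ ⟨hμ, hp⟩ le_rfl) (iSup₂_le fun η hη => ?_)
    have := h η hη.1 hη.2
    rwa [ws_sc hY hφ ha hη.1, ws_sc hY hφ ha hμ, ws_sc_le ha] at this

end

lemma ws_pi_heq {B : ℕ → Type} (π : ∀ i, B i → B (i+1)) {m n : ℕ} (h : m = n) {x : B m} {y : B n}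
    (hxy : HEq x y) : HEq (π m x) (π n y) := by
  subst h
  rw [eq_of_heq hxy]

lemma ws_tau_heq {B : ℕ → Type} (π : ∀ i, B i → B (i+1)) (j i : ℕ) (x : B j) :
    HEq (tauFrom π j (i + 1) x) (tauFrom π (j + 1) i (π j x)) := by
  induction i with
  | zero => exact HEq.rfl
  | succ i ih => exact ws_pi_heq π (by omega) ih

lemma ws_ent_heq {B : ℕ → Type} [∀ i, Fintype (B i)] [∀ i, MeasurableSpace (B i)]
    (X : ∀ i, Set (ℕ → B i)) {j m n : ℕ} (h : m = n) (f : B j → B m) (g : B j → B n)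
    (hfg : ∀ x, HEq (f x) (g x)) (μ : Measure (ℕ → B j)) :
    ent (X m) (μ.map (blockMap f)) = ent (X n) (μ.map (blockMap g)) := by
  subst h
  have : f = g := funext fun x => eq_of_heq (hfg x)
  rw [this]

lemma ws_ent_shift {B : ℕ → Type} [∀ i, Fintype (B i)] [∀ i, TopologicalSpace (B i)]
    [∀ i, DiscreteTopology (B i)] [∀ i, MeasurableSpace (B i)] [∀ i, BorelSpace (B i)]
    (X : ∀ i, Set (ℕ → B i)) (π : ∀ i, B i → B (i+1)) (j i : ℕ) (μ : Measure (ℕ → B j)) :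
    ent (X (j + (i + 1))) (μ.map (blockMap (tauFrom π j (i + 1)))) =
      ent (X (j + 1 + i)) ((μ.map (blockMap (π j))).map (blockMap (tauFrom π (j + 1) i))) := by
  rw [Measure.map_map (ws_meas_block _) (ws_meas_block _)]
  exact ws_ent_heq X (by omega) (tauFrom π j (i + 1)) (fun x => tauFrom π (j + 1) i (π j x))
    (ws_tau_heq π j i) μ

lemma ws_ent_zero {B : ℕ → Type} [∀ i, Fintype (B i)] [∀ i, MeasurableSpace (B i)]
    (X : ∀ i, Set (ℕ → B i)) (π : ∀ i, B i → B (i+1)) (j : ℕ) (μ : Measure (ℕ → B j)) :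
    ent (X (j + 0)) (μ.map (blockMap (tauFrom π j 0))) = ent (X j) μ := by
  have : μ.map (blockMap (tauFrom π j 0)) = μ := Measure.map_id
  exact congrArg (ent (X j)) this

lemma ws_cancel {x y : EReal} {r : ℝ} : x + (r : EReal) ≤ y + r ↔ x ≤ y := by
  constructor
  · intro h
    have := add_le_add h (le_refl (((-r : ℝ)) : EReal))
    rw [add_assoc, add_assoc, ← EReal.coe_add] at this
    simpa using this
  · intro h
    exact add_le_add h le_rfl

lemma ws_chain_one {k : ℕ} {B : ℕ → Type}
    [∀ i, Fintype (B i)] [∀ i, TopologicalSpace (B i)] [∀ i, DiscreteTopology (B i)]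
    [∀ i, MeasurableSpace (B i)] [∀ i, BorelSpace (B i)] (hk : 2 ≤ k)
    (X : ∀ i, Set (ℕ → B i)) (hX : ∀ i, 1 ≤ i → i ≤ k → IsSubshift (X i))
    (π : ∀ i, B i → B (i+1))
    (hπ : ∀ i, 1 ≤ i → i ≤ k - 1 → blockMap (π i) '' X i = X (i+1))
    (a : ℕ → ℝ) (ha₁ : 0 < a 1) (ha : ∀ i, 2 ≤ i → i ≤ k → 0 ≤ a i) :
    ws_Chain π X 1 k (fun i => a (i+1)) := by
  refine ⟨hX 1 le_rfl (by omega), fun i hi => hX _ (by omega) (by omega), ?_, ?_⟩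
  · intro i
    induction i with
    | zero => intro _ x hx; exact hx
    | succ i ih =>
      intro hi x hx
      have h1 := ih (by omega) x hx
      have h2 := hπ (1 + i) (by omega) (by omega)
      have h3 : blockMap (π (1 + i)) (blockMap (tauFrom π 1 i) x) ∈ X (1 + i + 1) := by
        rw [← h2]; exact ⟨_, h1, rfl⟩
      exact h3
  · intro i hi
    rcases Nat.eq_zero_or_pos i with h | h
    · subst h; exact ha₁.le
    · exact ha _ (by omega) (by omega)

noncomputable def ws_R {B : ℕ → Type} [∀ i, Fintype (B i)] [∀ i, MeasurableSpace (B i)]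
    (π : ∀ i, B i → B (i+1)) (X : ∀ i, Set (ℕ → B i)) (m : ℕ) (a : ℕ → ℝ)
    (ν : Measure (ℕ → B 2)) : ℝ :=
  ∑ i ∈ Finset.range m, a (i + 2) * ent (X (2 + i)) (ν.map (blockMap (tauFrom π 2 i)))

lemma ws_F1 {B : ℕ → Type} [∀ i, Fintype (B i)] [∀ i, TopologicalSpace (B i)]
    [∀ i, DiscreteTopology (B i)] [∀ i, MeasurableSpace (B i)] [∀ i, BorelSpace (B i)]
    (π : ∀ i, B i → B (i+1)) (X : ∀ i, Set (ℕ → B i)) {k : ℕ} (hk : 2 ≤ k) (a : ℕ → ℝ)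
    (φ : List (B 1) → ℝ) (μ : ProbabilityMeasure (ℕ → B 1)) :
    wValGen π X 1 k (fun i => a (i+1)) (genPot φ) μ =
      ws_W (X 1) φ (a 1) (μ : Measure (ℕ → B 1)) + (ws_R π X (k - 1) a (pushM (π 1) μ) : ℝ) := by
  obtain ⟨m, rfl⟩ : ∃ m, k = m + 1 := ⟨k - 1, by omega⟩
  unfold wValGen ws_W
  rw [add_assoc, ← EReal.coe_add]
  congr 2
  rw [Finset.sum_range_succ', add_comm]
  refine congrArg₂ (· + ·) ?_ ?_
  · rw [ws_ent_zero]
  · refine Finset.sum_congr rfl fun i _ => ?_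
    rw [ws_ent_shift]
    rfl

lemma ws_F2 {B : ℕ → Type} [∀ i, Fintype (B i)] [∀ i, TopologicalSpace (B i)]
    [∀ i, DiscreteTopology (B i)] [∀ i, MeasurableSpace (B i)] [∀ i, BorelSpace (B i)]
    (π : ∀ i, B i → B (i+1)) (X : ∀ i, Set (ℕ → B i)) {k : ℕ} (hk : 2 ≤ k) (a b : ℕ → ℝ)
    (hb0 : b 0 = a 1 + a 2) (hbi : ∀ i, 1 ≤ i → b i = a (i + 2))
    (φ : List (B 2) → ℝ) (ν : ProbabilityMeasure (ℕ → B 2)) :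
    wValGen π X 2 (k - 1) b (genPot φ) ν =
      ws_W (X 2) φ (a 1) (ν : Measure (ℕ → B 2)) +
        (ws_R π X (k - 1) a (ν : Measure (ℕ → B 2)) : ℝ) := by
  obtain ⟨m, rfl⟩ : ∃ m, k = m + 2 := ⟨k - 2, by omega⟩
  unfold wValGen ws_W ws_R
  rw [add_assoc, ← EReal.coe_add]
  congr 2
  rw [show m + 2 - 1 = m + 1 from rfl, Finset.sum_range_succ', Finset.sum_range_succ', hb0,
    ws_ent_zero, Finset.sum_congr rfl fun i _ => by rw [hbi (i + 1) (by omega)]]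
  ring

/-- Lemma 7.1 / `lem-t`: structure of the set of `a`-weighted equilibrium
states for a chain of `k` subshifts: it is non-empty compact convex with ergodic extreme
points; `μ ∈ I(Φ,a)` iff `μ ∈ I_{μ∘π₁⁻¹}((1/a₁)Φ)` and `μ∘π₁⁻¹ ∈ I(Φ^{(2)},b)` with
`b = (a₁+a₂, a₃, …, a_k)`; and `I(Φ,a)` is a singleton iff `I(Φ^{(2)},b)` is a singleton
`{ν}` and `I_ν((1/a₁)Φ)` contains a unique ergodic measure. -/
theorem weighted_eq_states_stmt_18 {k : ℕ} (hk : 2 ≤ k) {B : ℕ → Type}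
    [∀ i, Fintype (B i)] [∀ i, TopologicalSpace (B i)] [∀ i, DiscreteTopology (B i)]
    [∀ i, MeasurableSpace (B i)] [∀ i, BorelSpace (B i)]
    (X : ∀ i, Set (ℕ → B i)) (hX : ∀ i, 1 ≤ i → i ≤ k → IsSubshift (X i))
    (π : ∀ i, B i → B (i+1))
    (hπ : ∀ i, 1 ≤ i → i ≤ k - 1 → blockMap (π i) '' X i = X (i+1))
    (a : ℕ → ℝ) (ha₁ : 0 < a 1) (ha : ∀ i, 2 ≤ i → i ≤ k → 0 ≤ a i)
    (p : ℕ) (φ : List (B 1) → ℝ) (hφ : Dw (X 1) p φ)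
    (b : ℕ → ℝ) (hb0 : b 0 = a 1 + a 2) (hbi : ∀ i, 1 ≤ i → b i = a (i + 2)) :
    ((wEqSetGen π X 1 k (fun i => a (i+1)) (genPot φ)).Nonempty ∧
      IsCompact (wEqSetGen π X 1 k (fun i => a (i+1)) (genPot φ)) ∧
      ConvexPM (wEqSetGen π X 1 k (fun i => a (i+1)) (genPot φ)) ∧
      ∀ μ : ProbabilityMeasure (ℕ → B 1),
        IsExtremePM (wEqSetGen π X 1 k (fun i => a (i+1)) (genPot φ)) μ →
        Ergodic shiftMap (μ : Measure (ℕ → B 1))) ∧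
    (∀ μ : ProbabilityMeasure (ℕ → B 1),
      μ ∈ wEqSetGen π X 1 k (fun i => a (i+1)) (genPot φ) ↔
      ∃ ν : ProbabilityMeasure (ℕ → B 2), (ν : Measure (ℕ → B 2)) = pushM (π 1) μ ∧
        μ ∈ CondEqSet (X 1) (π 1) (scPot (a 1)⁻¹ (genPot φ)) (ν : Measure (ℕ → B 2)) ∧
        ν ∈ wEqSetGen π X 2 (k-1) b (genPot (phiTwo (X 1) (π 1) φ (a 1)))) ∧
    ((∃ μ : ProbabilityMeasure (ℕ → B 1),
        wEqSetGen π X 1 k (fun i => a (i+1)) (genPot φ) = {μ}) ↔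
      ∃ ν : ProbabilityMeasure (ℕ → B 2),
        wEqSetGen π X 2 (k-1) b (genPot (phiTwo (X 1) (π 1) φ (a 1))) = {ν} ∧
        ∃! ρ : ProbabilityMeasure (ℕ → B 1),
          ρ ∈ CondEqSet (X 1) (π 1) (scPot (a 1)⁻¹ (genPot φ)) (ν : Measure (ℕ → B 2)) ∧
            Ergodic shiftMap (ρ : Measure (ℕ → B 1))) := by
  obtain ⟨hφ0, -, c, hc0, hc1, hsub, -⟩ := hφ
  have hS : ws_Sub (X 1) φ c := ⟨hc0, hc1, hφ0, hsub⟩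
  have hch := ws_chain_one hk X hX π hπ a ha₁ ha
  have hX1 := hX 1 le_rfl (by omega)
  have hX2 : IsSubshift (X 2) := hX 2 (by omega) hk
  have hi2 : blockMap (π 1) '' X 1 = X 2 := hπ 1 le_rfl (by omega)
  have hZ : IsSubshift (blockMap (π 1) '' X 1) := by rw [hi2]; exact hX2
  have F1 := ws_F1 π X hk a φ
  have F2 := ws_F2 π X hk a b hb0 hbi (phiTwo (X 1) (π 1) φ (a 1))
  have push : ∀ μ ∈ MInv (X 1), ∃ ν : ProbabilityMeasure (ℕ → B 2),
      ν ∈ MInv (X 2) ∧ (ν : Measure (ℕ → B 2)) = pushM (π 1) μ := by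
    intro μ hμ
    have hp := ws_prob_map (μ : Measure (ℕ → B 1)) (π 1)
    refine ⟨⟨pushM (π 1) μ, hp⟩, ⟨ws_push_inv hμ.1 (π 1), ?_⟩, rfl⟩
    exact ws_push_supp hμ.2 hX2 (π 1) fun x hx => by rw [← hi2]; exact ⟨x, hx, rfl⟩
  have up : ∀ μ ∈ MInv (X 1), ∀ ν ∈ MInv (X 2), (ν : Measure (ℕ → B 2)) = pushM (π 1) μ →
      ws_W (X 1) φ (a 1) (μ : Measure (ℕ → B 1)) ≤
        ws_W (X 2) (phiTwo (X 1) (π 1) φ (a 1)) (a 1) (ν : Measure (ℕ → B 2)) := by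
    intro μ hμ ν hν hp
    rw [← hi2] at hν ⊢
    exact ws_W_upper (π 1) hX1 hφ0 ha₁ hZ hμ hν hp.symm
  have low : ∀ ν ∈ MInv (X 2), ∃ μ ∈ MInv (X 1), pushM (π 1) μ = (ν : Measure (ℕ → B 2)) ∧
      ws_W (X 2) (phiTwo (X 1) (π 1) φ (a 1)) (a 1) (ν : Measure (ℕ → B 2)) ≤
      ws_W (X 1) φ (a 1) (μ : Measure (ℕ → B 1)) := by
    intro ν hν
    rw [← hi2] at hν ⊢
    exact ws_W_lower (π 1) hX1 hS ha₁ hZ hν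
  have ii : ∀ μ : ProbabilityMeasure (ℕ → B 1),
      μ ∈ wEqSetGen π X 1 k (fun i => a (i+1)) (genPot φ) ↔
      ∃ ν : ProbabilityMeasure (ℕ → B 2), (ν : Measure (ℕ → B 2)) = pushM (π 1) μ ∧
        μ ∈ CondEqSet (X 1) (π 1) (scPot (a 1)⁻¹ (genPot φ)) (ν : Measure (ℕ → B 2)) ∧
        ν ∈ wEqSetGen π X 2 (k-1) b (genPot (phiTwo (X 1) (π 1) φ (a 1))) := by
    intro μ
    constructor
    · intro h
      obtain ⟨hμ, hmax⟩ := ws_mem_iff.1 h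
      obtain ⟨ν, hν, hp⟩ := push μ hμ
      refine ⟨ν, hp, (ws_cond_iff (π 1) hX1 hφ0 ha₁).2 ⟨hμ, hp.symm, fun η hη hpη => ?_⟩,
        ws_mem_iff.2 ⟨hν, fun ν' hν' => ?_⟩⟩
      · have := hmax η hη
        rw [F1, F1, hpη, hp] at this
        exact ws_cancel.1 this
      · obtain ⟨μ', hμ', hp', hle⟩ := low ν' hν'
        have h1 := hmax μ' hμ'
        rw [F1, F1, hp', ← hp] at h1
        rw [F2, F2]
        exact (ws_cancel.2 hle).trans (h1.trans (ws_cancel.2 (up μ hμ ν hν hp)))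
    · rintro ⟨ν, hp, hcond, hν⟩
      obtain ⟨hμ, -, hmax⟩ := (ws_cond_iff (π 1) hX1 hφ0 ha₁).1 hcond
      obtain ⟨hν, hνmax⟩ := ws_mem_iff.1 hν
      refine ws_mem_iff.2 ⟨hμ, fun η hη => ?_⟩
      obtain ⟨ν', hν', hp'⟩ := push η hη
      have h1 := hνmax ν' hν'
      obtain ⟨μ', hμ', hpμ', hle⟩ := low ν hν
      rw [F2, F2] at h1
      rw [F1, F1, ← hp, ← hp']
      exact (ws_cancel.2 (up η hη ν' hν' hp')).trans
        (h1.trans (ws_cancel.2 (hle.trans (hmax μ' hμ' hpμ'))))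
  have lift : ∀ ν ∈ wEqSetGen π X 2 (k-1) b (genPot (phiTwo (X 1) (π 1) φ (a 1))),
      ∃ μ ∈ wEqSetGen π X 1 k (fun i => a (i+1)) (genPot φ),
        (ν : Measure (ℕ → B 2)) = pushM (π 1) μ := by
    intro ν hνI
    have hν := (ws_mem_iff.1 hνI).1
    obtain ⟨μ, hμ, hp, hle⟩ := low ν hν
    refine ⟨μ, (ii μ).2 ⟨ν, hp.symm, (ws_cond_iff (π 1) hX1 hφ0 ha₁).2 ⟨hμ, hp, ?_⟩, hνI⟩,
      hp.symm⟩
    intro η hη hpη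
    exact (up η hη ν hν hpη.symm).trans hle
  refine ⟨⟨ws_I_nonempty hch hS, ws_I_compact hch hS, ws_I_convex hch hS,
    fun μ hμ => ws_I_ergodic hch hS hμ⟩, ii, ?_, ?_⟩
  · rintro ⟨μ, hμ⟩
    have hμI : μ ∈ wEqSetGen π X 1 k (fun i => a (i+1)) (genPot φ) := by rw [hμ]; rfl
    have huniq : ∀ η ∈ wEqSetGen π X 1 k (fun i => a (i+1)) (genPot φ), η = μ := by
      intro η hη
      rw [hμ] at hη; exact hη
    obtain ⟨ν, hp, hcond, hν⟩ := (ii μ).1 hμI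
    refine ⟨ν, ?_, μ, ⟨hcond, ?_⟩, ?_⟩
    · refine Set.eq_singleton_iff_unique_mem.2 ⟨hν, fun ν' hν' => ?_⟩
      obtain ⟨μ', hμ', hp'⟩ := lift ν' hν'
      rw [huniq μ' hμ'] at hp'
      exact Subtype.ext (hp'.trans hp.symm)
    · refine ws_I_ergodic hch hS ⟨hμI, fun μ₁ h1 μ₂ h2 _ _ _ _ => ?_⟩
      rw [huniq _ h1, huniq _ h2]
    · rintro ρ ⟨hρ, -⟩
      refine huniq ρ ((ii ρ).2 ⟨ν, ?_, hρ, hν⟩)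
      exact ((ws_cond_iff (π 1) hX1 hφ0 ha₁).1 hρ).2.1.symm
  · rintro ⟨ν, hν, ρ, ⟨hρ, -⟩, hu⟩
    refine ⟨ρ, ?_⟩
    have hall := ws_KM (ws_I_compact hch hS) (ws_I_convex hch hS) ρ (fun μ hμ => by
      refine hu μ ⟨?_, ws_I_ergodic hch hS hμ⟩
      obtain ⟨ν', -, hcond, hν'⟩ := (ii μ).1 hμ.1
      rw [hν] at hν'
      have e : ν' = ν := hν'
      rw [← e]; exact hcond)
    refine Set.eq_singleton_iff_unique_mem.2 ⟨?_, hall⟩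
    obtain ⟨μ, hμ⟩ := ws_I_nonempty hch hS
    rw [← hall μ hμ]; exact hμ
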